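/- The second cohomology of the Melikian algebra with values in the adjoint representation is 5-dimensional: H²(M, M) = ⟨Sq(1)⟩ ⊕ ⟨Sq(D₁)⟩ ⊕ ⟨Sq(D₂)⟩ ⊕ ⟨Sq(D̃₁)⟩ ⊕ ⟨Sq(D̃₂)⟩. -/

import Mathlib

open scoped BigOperators

namespace Melikian

/-- Index set for monomials in the truncated polynomial algebra
`A(2) = F[x₁,x₂]/(x₁⁵,x₂⁵)`. -/
abbrev Idx : Type := Fin 5 × Fin 5

/-- The truncated polynomial algebra `A(2)`, as functions on monomial exponents. -/
abbrev A (F : Type*) [Field F] : Type _ := Idx → F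

variable {F : Type*} [Field F]

/-- The monomial `x^b = x₁^{b₁} x₂^{b₂}`. -/
def X (b : Idx) : A F := fun a => if a = b then 1 else 0

/-- Truncated multiplication of `A(2)`. -/
def mulA (f g : A F) : A F := fun a =>
  ∑ b : Idx, ∑ c : Idx,
    if b.1.val + c.1.val = a.1.val ∧ b.2.val + c.2.val = a.2.val then f b * g c else 0

/-- Partial derivative `∂/∂x₁` on `A(2)`. -/
def d1 (f : A F) : A F := fun a =>
  if h : a.1.val + 1 < 5 then ((a.1.val + 1 : ℕ) : F) * f (⟨a.1.val + 1, h⟩, a.2) else 0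

/-- Partial derivative `∂/∂x₂` on `A(2)`. -/
def d2 (f : A F) : A F := fun a =>
  if h : a.2.val + 1 < 5 then ((a.2.val + 1 : ℕ) : F) * f (a.1, ⟨a.2.val + 1, h⟩) else 0

/-- The Witt–Jacobson algebra `W(2)` as a free `A(2)`-module with basis `D₁, D₂`:
an element `(f₁, f₂)` stands for `f₁D₁ + f₂D₂`. -/
abbrev W (F : Type*) [Field F] : Type _ := A F × A F

/-- Action of a derivation `D = f₁D₁+f₂D₂ ∈ W(2)` on `A(2)`. -/
def Dw (D : W F) (g : A F) : A F := mulA D.1 (d1 g) + mulA D.2 (d2 g)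

/-- Divergence `div(f₁D₁+f₂D₂) = D₁(f₁) + D₂(f₂)`. -/
def divW (D : W F) : A F := d1 D.1 + d2 D.2

/-- The usual bracket of `W(2)`. -/
def brW (D E : W F) : W F := (Dw D E.1 - Dw E D.1, Dw D E.2 - Dw E D.2)

/-- Multiplication of an element of `W(2)` by a truncated polynomial. -/
def smulA (f : A F) (D : W F) : W F := (mulA f D.1, mulA f D.2)

/-- The Melikian algebra `M = A(2) ⊕ W(2) ⊕ W(2)~` as an `F`-vector space. -/
abbrev Mel (F : Type*) [Field F] : Type _ := A F × W F × W F

/-- Inclusion of `A(2)` into `M`. -/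
def ιA (f : A F) : Mel F := (f, 0, 0)

/-- Inclusion of `W(2)` into `M`. -/
def ιW (D : W F) : Mel F := (0, D, 0)

/-- Inclusion of the second copy `W(2)~` into `M`, `D ↦ D̃`. -/
def ιT (D : W F) : Mel F := (0, 0, D)

/-- The Melikian bracket on `M = A(2) ⊕ W(2) ⊕ W(2)~`, defined by the rules
`[D,Ẽ] = [D,E]~ + 2 div(D) Ẽ`, `[D,f] = D(f) − 2 div(D) f`,
`[f₁D̃₁+f₂D̃₂, g₁D̃₁+g₂D̃₂] = f₁g₂ − f₂g₁`, `[f,Ẽ] = fE`,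
`[f,g] = 2(gD₂(f) − fD₂(g))D̃₁ + 2(fD₁(g) − gD₁(f))D̃₂`,
extended bilinearly and antisymmetrically (with the standard bracket on `W(2)`). -/
def brM (u v : Mel F) : Mel F :=
  ( (Dw u.2.1 v.1 - (2 : F) • mulA (divW u.2.1) v.1)
      - (Dw v.2.1 u.1 - (2 : F) • mulA (divW v.2.1) u.1)
      + (mulA u.2.2.1 v.2.2.2 - mulA u.2.2.2 v.2.2.1)
  , brW u.2.1 v.2.1 + smulA u.1 v.2.2 - smulA v.1 u.2.2
  , (brW u.2.1 v.2.2 + (2 : F) • smulA (divW u.2.1) v.2.2)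
      - (brW v.2.1 u.2.2 + (2 : F) • smulA (divW v.2.1) u.2.2)
      + ((2 : F) • (mulA v.1 (d2 u.1) - mulA u.1 (d2 v.1)),
         (2 : F) • (mulA u.1 (d1 v.1) - mulA v.1 (d1 u.1))) )

/-- `x^b D_i` as an element of `W(2)` (`i = 0` stands for `D₁`, `i = 1` for `D₂`). -/
def wOf (i : Fin 2) (b : Idx) : W F := if i = 0 then (X b, 0) else (0, X b)

/-- The element `x₁D₁ ∈ M`. -/
def x1D1 : Mel F := ιW (X (1, 0), 0)

/-- The element `x₂D₂ ∈ M`. -/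
def x2D2 : Mel F := ιW (0, X (0, 1))

/-- The element `1 ∈ A(2) ⊂ M`. -/
def oneM : Mel F := ιA (X (0, 0))

/-- The element `D_{i+1} ∈ W(2) ⊂ M`. -/
def DD (i : Fin 2) : Mel F := ιW (wOf i (0, 0))

/-- The element `D̃_{i+1} ∈ W(2)~ ⊂ M`. -/
def TT (i : Fin 2) : Mel F := ιT (wOf i (0, 0))

/-- Total degree of a monomial exponent. -/
def degA (b : Idx) : ℤ := (b.1.val : ℤ) + (b.2.val : ℤ)

/-- The degree-`d` piece `M_d` of the `ℤ`-grading of the Melikian algebra: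
`deg_M(f) = 3 deg(f) − 2` on `A(2)`, `deg_M(x^bD_i) = 3(|b|−1)` on `W(2)`, and
`deg_M(x^bD̃_i) = 3(|b|−1)+2` on `W(2)~`. -/
def Md (d : ℤ) : Submodule F (Mel F) :=
  Submodule.span F
    ( {m | ∃ b : Idx, m = ιA (X b) ∧ d = 3 * degA b - 2}
      ∪ {m | ∃ b : Idx, ∃ i : Fin 2, m = ιW (wOf i b) ∧ d = 3 * (degA b - 1)}
      ∪ {m | ∃ b : Idx, ∃ i : Fin 2, m = ιT (wOf i b) ∧ d = 3 * (degA b - 1) + 2} )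

/-- The part `M_{≥ d}` of the Melikian algebra. -/
def Mge (d : ℤ) : Submodule F (Mel F) := ⨆ e : ℤ, ⨆ _ : d ≤ e, (Md e : Submodule F (Mel F))

/-- The squaring `Sq(γ)(x,y) = Σ_{k=1}^{4} [γ^k(x), γ^{5−k}(y)] / (k!(5−k)!)`
of an operator `γ` on the Melikian algebra (characteristic 5). -/
def melSq (γ : Mel F → Mel F) (x y : Mel F) : Mel F :=
  ∑ k ∈ Finset.Icc 1 4,
    ((Nat.factorial k * Nat.factorial (5 - k) : ℕ) : F)⁻¹ • brM (γ^[k] x) (γ^[5 - k] y)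

/-- The Chevalley–Eilenberg coboundary of a linear 1-cochain of `M` with values in the
adjoint representation. -/
def cob (g : Mel F →ₗ[F] Mel F) (x y : Mel F) : Mel F :=
  brM x (g y) - brM y (g x) - g (brM x y)

section Monomials

/-- The monomial `x₁^m x₂^n`, which vanishes as soon as an exponent exceeds `4`. -/
def mon (m n : ℕ) : A F := fun a => if a.1.val = m ∧ a.2.val = n then 1 else 0

lemma X_eq_mon (b : Idx) : (X b : A F) = mon b.1.val b.2.val := by
  funext a
  simp [X, mon, Prod.ext_iff, Fin.ext_iff]

lemma mon_eq_X {m n : ℕ} (hm : m < 5) (hn : n < 5) : (mon m n : A F) = X (⟨m, hm⟩, ⟨n, hn⟩) :=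
  (X_eq_mon (⟨m, hm⟩, ⟨n, hn⟩)).symm

lemma mon_eq_zero {m n : ℕ} (h : ¬ (m < 5 ∧ n < 5)) : (mon m n : A F) = 0 := by
  funext a
  have h1 := a.1.isLt
  have h2 := a.2.isLt
  simp only [mon, Pi.zero_apply, ite_eq_right_iff, one_ne_zero, imp_false]
  omega

lemma eq_sum_X (f : A F) : f = ∑ b, f b • (X b : A F) := by
  funext a
  simp [X, Finset.sum_apply]

/-- Linear induction on monomials. -/
lemma A_induction {p : A F → Prop} (hadd : ∀ f g, p f → p g → p (f + g))
    (hsmul : ∀ (c : F) f, p f → p (c • f)) (hmon : ∀ m n, p (mon m n)) (f : A F) : p f := by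
  have h0 : p 0 := by simpa using hsmul 0 _ (hmon 0 0)
  rw [eq_sum_X f]
  exact Finset.sum_induction _ p hadd h0 fun b _ => hsmul _ _ (X_eq_mon (F := F) b ▸ hmon _ _)

lemma mulA_add_left (f g h : A F) : mulA (f + g) h = mulA f h + mulA g h := by
  funext a
  simp only [mulA, Pi.add_apply, ← Finset.sum_add_distrib, add_mul]
  exact Finset.sum_congr rfl fun b _ => Finset.sum_congr rfl fun c _ => by split_ifs <;> simp

lemma mulA_add_right (f g h : A F) : mulA f (g + h) = mulA f g + mulA f h := by
  funext a
  simp only [mulA, Pi.add_apply, ← Finset.sum_add_distrib, mul_add]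
  exact Finset.sum_congr rfl fun b _ => Finset.sum_congr rfl fun c _ => by split_ifs <;> simp

lemma mulA_smul_left (r : F) (f g : A F) : mulA (r • f) g = r • mulA f g := by
  funext a
  simp only [mulA, Pi.smul_apply, smul_eq_mul, Finset.mul_sum, mul_ite, mul_zero, mul_assoc]

lemma mulA_smul_right (r : F) (f g : A F) : mulA f (r • g) = r • mulA f g := by
  funext a
  simp only [mulA, Pi.smul_apply, smul_eq_mul, Finset.mul_sum, mul_ite, mul_zero, mul_left_comm]

lemma mulA_mon (a b c d : ℕ) : mulA (mon a b) (mon c d : A F) = mon (a + c) (b + d) := by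
  by_cases h1 : a < 5 ∧ b < 5
  · by_cases h2 : c < 5 ∧ d < 5
    · rw [mon_eq_X h1.1 h1.2, mon_eq_X h2.1 h2.2]
      funext k
      simp only [mulA, X, mon]
      rw [Finset.sum_eq_single (⟨a, h1.1⟩, ⟨b, h1.2⟩) (by intro x _ hx; simp [hx]) (by simp),
        Finset.sum_eq_single (⟨c, h2.1⟩, ⟨d, h2.2⟩) (by intro x _ hx; simp [hx]) (by simp)]
      simp [eq_comm]
    · rw [mon_eq_zero h2, mon_eq_zero (m := a + c) (n := b + d) (by omega)]
      funext k
      simp [mulA]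
  · rw [mon_eq_zero h1, mon_eq_zero (m := a + c) (n := b + d) (by omega)]
    funext k
    simp [mulA]

lemma d1_add (f g : A F) : d1 (f + g) = d1 f + d1 g := by
  funext a
  simp only [d1, Pi.add_apply]
  split_ifs <;> simp [mul_add]

lemma d2_add (f g : A F) : d2 (f + g) = d2 f + d2 g := by
  funext a
  simp only [d2, Pi.add_apply]
  split_ifs <;> simp [mul_add]

lemma d1_smul (r : F) (f : A F) : d1 (r • f) = r • d1 f := by
  funext a
  simp only [d1, Pi.smul_apply, smul_eq_mul]
  split_ifs <;> simp [mul_left_comm]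

lemma d2_smul (r : F) (f : A F) : d2 (r • f) = r • d2 f := by
  funext a
  simp only [d2, Pi.smul_apply, smul_eq_mul]
  split_ifs <;> simp [mul_left_comm]

lemma mulA_comm (f g : A F) : mulA f g = mulA g f := by
  induction f using A_induction with
  | hadd f f' h h' => rw [mulA_add_left, mulA_add_right, h, h']
  | hsmul c f h => rw [mulA_smul_left, mulA_smul_right, h]
  | hmon a b =>
    induction g using A_induction with
    | hadd f f' h h' => rw [mulA_add_left, mulA_add_right, h, h']
    | hsmul c f h => rw [mulA_smul_left, mulA_smul_right, h]
    | hmon c d => rw [mulA_mon, mulA_mon, add_comm, add_comm b]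

lemma mulA_assoc (f g h : A F) : mulA (mulA f g) h = mulA f (mulA g h) := by
  induction f using A_induction with
  | hadd f f' i i' => simp only [mulA_add_left, i, i']
  | hsmul c f i => simp only [mulA_smul_left, i]
  | hmon a b =>
    induction g using A_induction with
    | hadd f f' i i' => simp only [mulA_add_left, mulA_add_right, i, i']
    | hsmul c f i => simp only [mulA_smul_left, mulA_smul_right, i]
    | hmon c d =>
      induction h using A_induction with
      | hadd f f' i i' => simp only [mulA_add_right, i, i']
      | hsmul c f i => simp only [mulA_smul_right, i]
      | hmon e k => simp only [mulA_mon, add_assoc]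

lemma natCast_smul_mon_pred_add (a c b : ℕ) :
    (a : F) • (mon (a - 1 + c) b : A F) = (a : F) • mon (a + c - 1) b := by
  rcases a with _ | a
  · simp
  · congr 2; omega

lemma natCast_smul_mon_pred_add' (a c b : ℕ) :
    (a : F) • (mon b (a - 1 + c) : A F) = (a : F) • mon b (a + c - 1) := by
  rcases a with _ | a
  · simp
  · congr 2; omega

variable [CharP F 5]

lemma d1_mon (a b : ℕ) : d1 (mon a b : A F) = (a : F) • mon (a - 1) b := by
  funext k
  have hk := k.1.isLt
  have h5 : ((4 + 1 : ℕ) : F) = 0 := CharP.cast_eq_zero F 5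
  simp only [d1, mon, Pi.smul_apply, smul_eq_mul, mul_ite, mul_one, mul_zero]
  rcases a with _ | m
  · simp
  · rw [Nat.add_sub_cancel]
    split_ifs with h1 h2 h3 h4
    · rw [h2.1]
    · omega
    · omega
    · rfl
    · rw [show m = 4 by omega, h5]
    · rfl

lemma d2_mon (a b : ℕ) : d2 (mon a b : A F) = (b : F) • mon a (b - 1) := by
  funext k
  have hk := k.2.isLt
  have h5 : ((4 + 1 : ℕ) : F) = 0 := CharP.cast_eq_zero F 5
  simp only [d2, mon, Pi.smul_apply, smul_eq_mul, mul_ite, mul_one, mul_zero]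
  rcases b with _ | m
  · simp
  · rw [Nat.add_sub_cancel]
    split_ifs with h1 h2 h3 h4
    · rw [h2.2]
    · omega
    · omega
    · rfl
    · rw [show m = 4 by omega, h5]
    · rfl

lemma d1_mulA (f g : A F) : d1 (mulA f g) = mulA (d1 f) g + mulA f (d1 g) := by
  induction f using A_induction with
  | hadd f f' h h' => simp only [mulA_add_left, d1_add, h, h']; abel
  | hsmul c f h => simp only [mulA_smul_left, d1_smul, h, smul_add]
  | hmon a b =>
    induction g using A_induction with
    | hadd f f' h h' => simp only [mulA_add_right, d1_add, h, h']; abel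
    | hsmul c f h => simp only [mulA_smul_right, d1_smul, h, smul_add]
    | hmon c d =>
      simp only [mulA_mon, d1_mon, mulA_smul_left, mulA_smul_right, natCast_smul_mon_pred_add,
        add_comm a (c - 1), add_comm c a, Nat.cast_add, add_smul]

lemma d2_mulA (f g : A F) : d2 (mulA f g) = mulA (d2 f) g + mulA f (d2 g) := by
  induction f using A_induction with
  | hadd f f' h h' => simp only [mulA_add_left, d2_add, h, h']; abel
  | hsmul c f h => simp only [mulA_smul_left, d2_smul, h, smul_add]
  | hmon a b =>
    induction g using A_induction with
    | hadd f f' h h' => simp only [mulA_add_right, d2_add, h, h']; abel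
    | hsmul c f h => simp only [mulA_smul_right, d2_smul, h, smul_add]
    | hmon c d =>
      simp only [mulA_mon, d2_mon, mulA_smul_left, mulA_smul_right, natCast_smul_mon_pred_add',
        add_comm b (d - 1), add_comm d b, Nat.cast_add, add_smul]

lemma d1_d2 (f : A F) : d1 (d2 f) = d2 (d1 f) := by
  induction f using A_induction with
  | hadd f g h h' => simp only [d1_add, d2_add, h, h']
  | hsmul c f h => simp only [d1_smul, d2_smul, h]
  | hmon a b => rw [d1_mon, d2_mon, d1_smul, d2_smul, d1_mon, d2_mon, smul_comm]

end Monomials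

section Abstract
variable {R : Type*} [CommRing R]

/-- The Melikian bracket over a commutative ring with two maps `∂ ∂' : R → R`. -/
def brR (p q : R → R) (u v : R × (R × R) × (R × R)) : R × (R × R) × (R × R) :=
  let dv (D : R × R) : R := p D.1 + q D.2
  let ap (D : R × R) (f : R) : R := D.1 * p f + D.2 * q f
  ( ap u.2.1 v.1 - 2 * (dv u.2.1 * v.1) - (ap v.2.1 u.1 - 2 * (dv v.2.1 * u.1))
      + (u.2.2.1 * v.2.2.2 - u.2.2.2 * v.2.2.1),
    (ap u.2.1 v.2.1.1 - ap v.2.1 u.2.1.1 + u.1 * v.2.2.1 - v.1 * u.2.2.1,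
     ap u.2.1 v.2.1.2 - ap v.2.1 u.2.1.2 + u.1 * v.2.2.2 - v.1 * u.2.2.2),
    (ap u.2.1 v.2.2.1 - ap v.2.2 u.2.1.1 + 2 * (dv u.2.1 * v.2.2.1)
      - (ap v.2.1 u.2.2.1 - ap u.2.2 v.2.1.1 + 2 * (dv v.2.1 * u.2.2.1))
      + 2 * (v.1 * q u.1 - u.1 * q v.1),
     ap u.2.1 v.2.2.2 - ap v.2.2 u.2.1.2 + 2 * (dv u.2.1 * v.2.2.2)
      - (ap v.2.1 u.2.2.2 - ap u.2.2 v.2.1.2 + 2 * (dv v.2.1 * u.2.2.2))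
      + 2 * (u.1 * p v.1 - v.1 * p u.1)))

variable (p q : Derivation ℤ R R)
set_option maxHeartbeats 4000000 in
lemma brR_jacobi (hpq : ∀ a, p (q a) = q (p a)) (h5 : (5 : R) = 0)
    (u v w : R × (R × R) × (R × R)) :
    brR p q (brR p q u v) w + brR p q (brR p q v w) u + brR p q (brR p q w u) v = 0 := by
  obtain ⟨a, ⟨b, c⟩, d, e⟩ := u
  obtain ⟨a', ⟨b', c'⟩, d', e'⟩ := v
  obtain ⟨a'', ⟨b'', c''⟩, d'', e''⟩ := w
  have h10 : (10 : R) = 0 := by linear_combination 2 * h5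
  have h2p : p (2:R) = 0 := by simpa using p.map_natCast 2
  have h2q : q (2:R) = 0 := by simpa using q.map_natCast 2
  simp only [brR, Prod.mk_add_mk, Prod.mk_eq_zero, map_add, map_sub, Derivation.leibniz, smul_eq_mul, hpq, h2p, h2q]
  refine ⟨?_, ⟨?_, ?_⟩, ?_, ?_⟩ <;> ring_nf <;> simp only [h5, h10, mul_zero, neg_zero, add_zero, sub_zero]

end Abstract

section Jacobi
variable (F)

/-- The truncated polynomial algebra with `mulA` as multiplication. -/
def TruncPoly : Type _ := A F

instance : AddCommGroup (TruncPoly F) := inferInstanceAs (AddCommGroup (Idx → F))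

lemma mulA_one (f : A F) : mulA f (mon 0 0) = f := by
  induction f using A_induction with
  | hadd f g h h' => rw [mulA_add_left, h, h']
  | hsmul c f h => rw [mulA_smul_left, h]
  | hmon a b => rw [mulA_mon, add_zero, add_zero]

lemma zero_mulA (f : A F) : mulA 0 f = 0 := by
  simpa using mulA_smul_left 0 (0 : A F) f

instance : CommRing (TruncPoly F) :=
  { (inferInstance : AddCommGroup (TruncPoly F)) with
    mul := mulA
    one := (mon 0 0 : A F)
    left_distrib := mulA_add_right
    right_distrib := mulA_add_left
    zero_mul := zero_mulA F
    mul_zero := fun f => (mulA_comm _ _).trans (zero_mulA F f)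
    mul_assoc := mulA_assoc
    one_mul := fun f => (mulA_comm _ _).trans (mulA_one F f)
    mul_one := mulA_one F
    mul_comm := mulA_comm }

variable [CharP F 5]

/-- `∂/∂x₁` as a derivation. -/
def derivOne : Derivation ℤ (TruncPoly F) (TruncPoly F) :=
  Derivation.mk' (AddMonoidHom.toIntLinearMap (AddMonoidHom.mk' (d1 : A F → A F) d1_add))
    fun f g => (d1_mulA (F := F) f g).trans
      ((add_comm _ _).trans (congrArg (mulA f (d1 g) + ·) (mulA_comm _ _)))

/-- `∂/∂x₂` as a derivation. -/
def derivTwo : Derivation ℤ (TruncPoly F) (TruncPoly F) :=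
  Derivation.mk' (AddMonoidHom.toIntLinearMap (AddMonoidHom.mk' (d2 : A F → A F) d2_add))
    fun f g => (d2_mulA (F := F) f g).trans
      ((add_comm _ _).trans (congrArg (mulA f (d2 g) + ·) (mulA_comm _ _)))

variable {F}

lemma truncPoly_five : (5 : TruncPoly F) = 0 := by
  have h : (5 : ℕ) • (1 : TruncPoly F) = 0 := by
    have : (5 : ℕ) • (mon 0 0 : A F) = 0 := by
      rw [← Nat.cast_smul_eq_nsmul F, CharP.cast_eq_zero F 5, zero_smul]
    exact this
  simpa using h

lemma brM_eq_brR (u v : Mel F) :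
    brM u v = brR (R := TruncPoly F) (derivOne F) (derivTwo F) u v := by
  simp only [brM, two_smul, brR, two_mul]
  rfl

lemma brM_jacobi (u v w : Mel F) :
    brM (brM u v) w + brM (brM v w) u + brM (brM w u) v = 0 := by
  have h : (brM : Mel F → Mel F → Mel F) =
      brR (R := TruncPoly F) (derivOne F) (derivTwo F) := funext₂ brM_eq_brR
  rw [h]
  exact brR_jacobi (R := TruncPoly F) (derivOne F) (derivTwo F) (fun f => d1_d2 (F := F) f)
    truncPoly_five u v w

end Jacobi

section Basis

lemma brM_skew (u v : Mel F) : brM u v = -brM v u := by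
  simp only [brM, brW, Dw, smulA, Prod.ext_iff, Prod.fst_neg, Prod.snd_neg, Prod.fst_add,
    Prod.snd_add, Prod.fst_sub, Prod.snd_sub, smul_sub,
    mulA_comm u.2.2.1 v.2.2.2, mulA_comm u.2.2.2 v.2.2.1]
  refine ⟨?_, ⟨?_, ?_⟩, ?_, ?_⟩ <;> abel

lemma brM_self (u : Mel F) : brM u u = 0 := by
  simp only [brM, brW, Dw, smulA, Prod.ext_iff, Prod.fst_zero, Prod.snd_zero, Prod.fst_add,
    Prod.snd_add, Prod.fst_sub, Prod.snd_sub, smul_sub, mulA_comm u.2.2.1 u.2.2.2]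
  refine ⟨?_, ⟨?_, ?_⟩, ?_, ?_⟩ <;> abel

lemma brM_add_right (u v w : Mel F) : brM u (v + w) = brM u v + brM u w := by
  simp only [brM, brW, Dw, divW, smulA, Prod.ext_iff, Prod.fst_add, Prod.snd_add, Prod.fst_sub,
    Prod.snd_sub, Prod.smul_fst, Prod.smul_snd, mulA_add_left, mulA_add_right, d1_add, d2_add,
    smul_add, smul_sub]
  refine ⟨?_, ⟨?_, ?_⟩, ?_, ?_⟩ <;> abel

lemma brM_smul_right (c : F) (u v : Mel F) : brM u (c • v) = c • brM u v := by
  simp only [brM, brW, Dw, divW, smulA, Prod.ext_iff, Prod.fst_add, Prod.snd_add, Prod.fst_sub,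
    Prod.snd_sub, Prod.smul_fst, Prod.smul_snd, mulA_smul_left, mulA_smul_right, d1_smul, d2_smul,
    smul_add, smul_sub, mulA_add_left, smul_comm (2 : F) c]
  simp

/-- The Melikian bracket as a bilinear map. -/
def brB : Mel F →ₗ[F] Mel F →ₗ[F] Mel F :=
  LinearMap.mk₂ F brM
    (fun u v w => by rw [brM_skew, brM_add_right, neg_add, ← brM_skew, ← brM_skew])
    (fun c u v => by rw [brM_skew, brM_smul_right, ← smul_neg, ← brM_skew])
    brM_add_right (fun c u v => brM_smul_right c u v)

@[simp] lemma brB_apply (u v : Mel F) : brB u v = brM u v := rfl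

end Basis

section StructureConstants

/-- Folds `g` over the terms of the bracket of the monomial of kind `s` and exponents `(a, b)` with
the monomial of kind `t` and exponents `(c, d)`. Kinds `0, 1, 2, 3, 4` stand for `A(2)`, `A(2)D₁`,
`A(2)D₂`, `A(2)D̃₁`, `A(2)D̃₂`, and `g` receives the coefficient, kind and exponents of a term. -/
def brFold {β : Type*} (g : ℕ → ℕ → ℕ → ℕ → β → β) (z : β) (s a b t c d : ℕ) : β :=
  match s, t with
  | 0, 0 => g (Nat.add (Nat.mul 2 b) (Nat.mul 3 d)) 3 (Nat.add a c) (Nat.sub (Nat.add b d) 1)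
      (g (Nat.add (Nat.mul 3 a) (Nat.mul 2 c)) 4 (Nat.sub (Nat.add a c) 1) (Nat.add b d) z)
  | 0, 1 => g (Nat.add (Nat.mul 4 a) (Nat.mul 2 c)) 0 (Nat.sub (Nat.add a c) 1) (Nat.add b d) z
  | 0, 2 => g (Nat.add (Nat.mul 4 b) (Nat.mul 2 d)) 0 (Nat.add a c) (Nat.sub (Nat.add b d) 1) z
  | 0, 3 => g 1 1 (Nat.add a c) (Nat.add b d) z
  | 0, 4 => g 1 2 (Nat.add a c) (Nat.add b d) z
  | 1, 0 => g (Nat.add (Nat.mul 3 a) c) 0 (Nat.sub (Nat.add a c) 1) (Nat.add b d) z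
  | 1, 1 => g (Nat.add (Nat.mul 4 a) c) 1 (Nat.sub (Nat.add a c) 1) (Nat.add b d) z
  | 1, 2 => g c 2 (Nat.sub (Nat.add a c) 1) (Nat.add b d)
      (g (Nat.mul 4 b) 1 (Nat.add a c) (Nat.sub (Nat.add b d) 1) z)
  | 1, 3 => g (Nat.add a c) 3 (Nat.sub (Nat.add a c) 1) (Nat.add b d) z
  | 1, 4 => g (Nat.add (Nat.mul 2 a) c) 4 (Nat.sub (Nat.add a c) 1) (Nat.add b d)
      (g (Nat.mul 4 b) 3 (Nat.add a c) (Nat.sub (Nat.add b d) 1) z)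
  | 2, 0 => g (Nat.add (Nat.mul 3 b) d) 0 (Nat.add a c) (Nat.sub (Nat.add b d) 1) z
  | 2, 1 => g d 1 (Nat.add a c) (Nat.sub (Nat.add b d) 1)
      (g (Nat.mul 4 a) 2 (Nat.sub (Nat.add a c) 1) (Nat.add b d) z)
  | 2, 2 => g (Nat.add (Nat.mul 4 b) d) 2 (Nat.add a c) (Nat.sub (Nat.add b d) 1) z
  | 2, 3 => g (Nat.add (Nat.mul 2 b) d) 3 (Nat.add a c) (Nat.sub (Nat.add b d) 1)
      (g (Nat.mul 4 a) 4 (Nat.sub (Nat.add a c) 1) (Nat.add b d) z)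
  | 2, 4 => g (Nat.add b d) 4 (Nat.add a c) (Nat.sub (Nat.add b d) 1) z
  | 3, 0 => g 4 1 (Nat.add a c) (Nat.add b d) z
  | 3, 1 => g (Nat.add (Nat.mul 4 a) (Nat.mul 4 c)) 3 (Nat.sub (Nat.add a c) 1) (Nat.add b d) z
  | 3, 2 => g (Nat.add (Nat.mul 4 b) (Nat.mul 3 d)) 3 (Nat.add a c) (Nat.sub (Nat.add b d) 1)
      (g c 4 (Nat.sub (Nat.add a c) 1) (Nat.add b d) z)
  | 3, 4 => g 1 0 (Nat.add a c) (Nat.add b d) z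
  | 4, 0 => g 4 2 (Nat.add a c) (Nat.add b d) z
  | 4, 1 => g (Nat.add (Nat.mul 4 a) (Nat.mul 3 c)) 4 (Nat.sub (Nat.add a c) 1) (Nat.add b d)
      (g d 3 (Nat.add a c) (Nat.sub (Nat.add b d) 1) z)
  | 4, 2 => g (Nat.add (Nat.mul 4 b) (Nat.mul 4 d)) 4 (Nat.add a c) (Nat.sub (Nat.add b d) 1) z
  | 4, 3 => g 4 0 (Nat.add a c) (Nat.add b d) z
  | _, _ => z

/-- The weight of the generator of kind `s` under `ad (x₁D₁)`. -/
def sh1 : ℕ → ℕ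
  | 0 => 3
  | 1 => 4
  | 2 => 0
  | 3 => 1
  | _ => 2

/-- The weight of the generator of kind `s` under `ad (x₂D₂)`. -/
def sh2 : ℕ → ℕ
  | 0 => 3
  | 1 => 0
  | 2 => 4
  | 3 => 2
  | _ => 1

/-- Parametricity of `brFold`, keeping track of kinds and weights of the terms. -/
lemma brFold_rel {β γ : Type*} (P : β → γ → Prop) {g : ℕ → ℕ → ℕ → ℕ → β → β}
    {g' : ℕ → ℕ → ℕ → ℕ → γ → γ} {z : β} {z' : γ} (s a b t c d : ℕ) (hz : P z z')
    (hg : ∀ n k p q r r', k < 5 → (n = 0 ∨ (p + sh1 k) % 5 = (a + sh1 s + (c + sh1 t)) % 5 ∧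
      (q + sh2 k) % 5 = (b + sh2 s + (d + sh2 t)) % 5) → P r r' → P (g n k p q r) (g' n k p q r')) :
    P (brFold g z s a b t c d) (brFold g' z' s a b t c d) := by
  unfold brFold
  split <;> simp only [sh1, sh2] at hg
  case h_24 => exact hz
  all_goals
    first
    | refine hg _ _ _ _ _ _ (by norm_num) ?_ hz
      simp only [Nat.add_eq, Nat.sub_eq, Nat.mul_eq]
      omega
    | refine hg _ _ _ _ _ _ (by norm_num) ?_ (hg _ _ _ _ _ _ (by norm_num) ?_ hz) <;>
      simp only [Nat.add_eq, Nat.sub_eq, Nat.mul_eq] <;>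
      omega

/-- The component of kind `s` of an element of `M`. -/
def comp : ℕ → Mel F →ₗ[F] A F
  | 0 => LinearMap.fst F _ _
  | 1 => LinearMap.fst F _ _ ∘ₗ LinearMap.fst F _ _ ∘ₗ LinearMap.snd F _ _
  | 2 => LinearMap.snd F _ _ ∘ₗ LinearMap.fst F _ _ ∘ₗ LinearMap.snd F _ _
  | 3 => LinearMap.fst F _ _ ∘ₗ LinearMap.snd F _ _ ∘ₗ LinearMap.snd F _ _
  | _ => LinearMap.snd F _ _ ∘ₗ LinearMap.snd F _ _ ∘ₗ LinearMap.snd F _ _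

/-- The inclusion of the component of kind `s` of `M`. -/
def inj (s : ℕ) (f : A F) : Mel F :=
  match s with
  | 0 => (f, 0, 0)
  | 1 => (0, (f, 0), 0)
  | 2 => (0, (0, f), 0)
  | 3 => (0, 0, (f, 0))
  | _ => (0, 0, (0, f))

lemma comp_inj {s t : ℕ} (hs : s < 5) (ht : t < 5) (f : A F) :
    comp s (inj t f) = if s = t then f else 0 := by
  interval_cases s <;> interval_cases t <;> simp [comp, inj]

lemma eq_sum_inj_comp (v : Mel F) : v = ∑ s ∈ Finset.range 5, inj s (comp s v) := by
  simp [Finset.sum_range_succ, comp, inj]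

lemma inj_add (s : ℕ) (f g : A F) : inj s (f + g) = inj s f + inj s g := by
  unfold inj; split <;> simp

lemma inj_smul (s : ℕ) (c : F) (f : A F) : inj s (c • f) = c • inj s f := by
  unfold inj; split <;> simp

/-- The monomial of kind `s` and exponents `(a, b)`. -/
def bas (s a b : ℕ) : Mel F := inj s (mon a b)

lemma mulA_zero (f : A F) : mulA f 0 = 0 := by rw [mulA_comm, zero_mulA]

lemma d1_zero : d1 (0 : A F) = 0 := by simpa using d1_smul 0 (0 : A F)

lemma d2_zero : d2 (0 : A F) = 0 := by simpa using d2_smul 0 (0 : A F)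

section
variable [CharP F 5]

lemma mulA_d1_mon (a b c d : ℕ) :
    mulA (mon a b) (d1 (mon c d : A F)) = (c : F) • mon (a + c - 1) (b + d) := by
  rw [d1_mon, mulA_smul_right, mulA_mon, add_comm a, natCast_smul_mon_pred_add, add_comm c]

lemma mulA_d2_mon (a b c d : ℕ) :
    mulA (mon a b) (d2 (mon c d : A F)) = (d : F) • mon (a + c) (b + d - 1) := by
  rw [d2_mon, mulA_smul_right, mulA_mon, add_comm b, natCast_smul_mon_pred_add', add_comm d]

lemma d1_mon_mulA (a b c d : ℕ) :
    mulA (d1 (mon a b : A F)) (mon c d) = (a : F) • mon (a + c - 1) (b + d) := by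
  rw [mulA_comm, mulA_d1_mon, add_comm c, add_comm d]

lemma d2_mon_mulA (a b c d : ℕ) :
    mulA (d2 (mon a b : A F)) (mon c d) = (b : F) • mon (a + c) (b + d - 1) := by
  rw [mulA_comm, mulA_d2_mon, add_comm c, add_comm d]

lemma brM_bas (s a b t c d : ℕ) (hs : s < 5) (ht : t < 5) :
    brM (bas s a b) (bas t c d : Mel F) =
      brFold (fun n k p q r => (n : F) • bas k p q + r) 0 s a b t c d := by
  have h5 : ((5 : ℕ) : F) = 0 := CharP.cast_eq_zero F 5
  have h3 : (3 : F) = -2 := by push_cast at h5; linear_combination h5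
  have h4 : (4 : F) = -1 := by push_cast at h5; linear_combination h5
  interval_cases s <;> interval_cases t <;>
    simp only [brFold, bas, inj, brM, brW, Dw, divW, smulA, Prod.mk.injEq, Prod.mk_add_mk,
      Prod.mk_sub_mk, Prod.smul_mk, zero_mulA, mulA_zero, d1_zero, d2_zero, add_zero, zero_add,
      sub_zero, zero_sub, smul_zero, mulA_d1_mon, mulA_d2_mon, d1_mon_mulA, d2_mon_mulA, mulA_mon,
      Nat.add_comm c a, Nat.add_comm d b, Nat.add_eq, Nat.sub_eq, Nat.mul_eq, Nat.cast_add,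
      Nat.cast_mul, Nat.cast_ofNat, Nat.cast_one, h3, h4, Prod.fst_zero,
      Prod.snd_zero, sub_self, Prod.mk_eq_zero] <;>
    (repeat' apply And.intro) <;> first | trivial | module

end

end StructureConstants

section Coordinates

/-- The weight of the basis element number `k` under `ad (x₁D₁)`. -/
def wt1 (k : ℕ) : ℕ := Nat.add (Nat.mod (Nat.div k 5) 5) (sh1 (Nat.div k 25))

/-- The weight of the basis element number `k` under `ad (x₂D₂)`. -/
def wt2 (k : ℕ) : ℕ := Nat.add (Nat.mod k 5) (sh2 (Nat.div k 25))

/-- The first exponent of the monomial of kind `s` and first weight `p`. -/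
def ex1 (s p : ℕ) : ℕ := Nat.mod (Nat.add p (Nat.sub 5 (sh1 s))) 5

/-- The second exponent of the monomial of kind `s` and second weight `q`. -/
def ex2 (s q : ℕ) : ℕ := Nat.mod (Nat.add q (Nat.sub 5 (sh2 s))) 5

lemma sh1_lt (s : ℕ) : sh1 s < 5 := by unfold sh1; split <;> norm_num

lemma sh2_lt (s : ℕ) : sh2 s < 5 := by unfold sh2; split <;> norm_num

lemma ex1_lt (s p : ℕ) : ex1 s p < 5 := Nat.mod_lt _ (by norm_num)

lemma ex2_lt (s q : ℕ) : ex2 s q < 5 := Nat.mod_lt _ (by norm_num)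

lemma eq_ex1_iff {s p a : ℕ} (ha : a < 5) : a = ex1 s p ↔ (a + sh1 s) % 5 = p % 5 := by
  have := sh1_lt s
  change a = (p + (5 - sh1 s)) % 5 ↔ _
  omega

lemma eq_ex2_iff {s q b : ℕ} (hb : b < 5) : b = ex2 s q ↔ (b + sh2 s) % 5 = q % 5 := by
  have := sh2_lt s
  change b = (q + (5 - sh2 s)) % 5 ↔ _
  omega

lemma ex1_congr (s : ℕ) {p p' : ℕ} (h : p % 5 = p' % 5) : ex1 s p = ex1 s p' := by
  rw [eq_ex1_iff (ex1_lt s p), ← h, ← eq_ex1_iff (ex1_lt s p)]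

lemma ex2_congr (s : ℕ) {q q' : ℕ} (h : q % 5 = q' % 5) : ex2 s q = ex2 s q' := by
  rw [eq_ex2_iff (ex2_lt s q), ← h, ← eq_ex2_iff (ex2_lt s q)]

/-- The basis of `M`: `e k` has kind `k / 25` and exponents `(k / 5 % 5, k % 5)`. -/
def e (k : ℕ) : Mel F := bas (k / 25) (k / 5 % 5) (k % 5)

lemma e_code {s a b : ℕ} (ha : a < 5) (hb : b < 5) :
    (e (s * 25 + (a * 5 + b)) : Mel F) = bas s a b := by
  unfold e; congr 1 <;> omega

lemma bas_eq_zero {s a b : ℕ} (h : ¬ (a < 5 ∧ b < 5)) : (bas s a b : Mel F) = 0 := by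
  rw [bas, mon_eq_zero h]; unfold inj; split <;> rfl

/-- The basis coordinate number `k`. -/
def co (k : ℕ) : Mel F →ₗ[F] F :=
  LinearMap.proj ((⟨k / 5 % 5, Nat.mod_lt _ (by norm_num)⟩,
    ⟨k % 5, Nat.mod_lt _ (by norm_num)⟩) : Idx) ∘ₗ comp (k / 25)

/-- The coordinate of kind `s` and weight `(p, q)`. -/
def kc (s p q : ℕ) : Mel F →ₗ[F] F :=
  LinearMap.proj ((⟨ex1 s p, ex1_lt s p⟩, ⟨ex2 s q, ex2_lt s q⟩) : Idx) ∘ₗ comp s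

lemma kc_congr (s : ℕ) {p p' q q' : ℕ} (hp : p % 5 = p' % 5) (hq : q % 5 = q' % 5) :
    (kc s p q : Mel F →ₗ[F] F) = kc s p' q' := by
  simp only [kc, ex1_congr s hp, ex2_congr s hq]

lemma kc_bas {s t : ℕ} (hs : s < 5) (ht : t < 5) (p q a b : ℕ) :
    kc s p q (bas t a b : Mel F) = if t = s ∧ a = ex1 s p ∧ b = ex2 s q then 1 else 0 := by
  simp only [kc, bas, LinearMap.comp_apply, comp_inj hs ht, LinearMap.proj_apply]
  by_cases h : s = t
  · subst h
    simp [mon, eq_comm]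
  · simp [h, Ne.symm h]

lemma co_bas {k t : ℕ} (hk : k < 125) (ht : t < 5) (a b : ℕ) :
    co k (bas t a b : Mel F) = if t = k / 25 ∧ a = k / 5 % 5 ∧ b = k % 5 then 1 else 0 := by
  simp only [co, bas, LinearMap.comp_apply, comp_inj (show k / 25 < 5 by omega) ht,
    LinearMap.proj_apply]
  by_cases h : k / 25 = t
  · subst h
    simp [mon, eq_comm]
  · simp [h, Ne.symm h]

lemma co_e {k l : ℕ} (hk : k < 125) (hl : l < 125) :
    co k (e l : Mel F) = if l = k then 1 else 0 := by
  rw [e, co_bas hk (by omega)]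
  exact if_congr (by omega) rfl rfl

/-- Linear induction on the monomials of `M`. -/
lemma Mel_induction {P : Mel F → Prop} (hadd : ∀ u v, P u → P v → P (u + v))
    (hsmul : ∀ (c : F) u, P u → P (c • u))
    (hbas : ∀ s a b, s < 5 → a < 5 → b < 5 → P (bas s a b)) (v : Mel F) : P v := by
  have h0 : P 0 := by simpa using hsmul 0 _ (hbas 0 0 0 (by norm_num) (by norm_num) (by norm_num))
  rw [eq_sum_inj_comp v]
  refine Finset.sum_induction _ P hadd h0 fun s hs => ?_
  refine A_induction (p := fun f => P (inj s f)) (fun f g hf hg => by rw [inj_add]; exact hadd _ _ hf hg)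
    (fun c f hf => by rw [inj_smul]; exact hsmul _ _ hf) (fun m n => ?_) _
  by_cases h : m < 5 ∧ n < 5
  · exact hbas s m n (Finset.mem_range.1 hs) h.1 h.2
  · have : (inj s (mon m n) : Mel F) = 0 := bas_eq_zero h
    rw [this]; exact h0

/-- Linear maps which agree on the basis are equal. -/
lemma ext_e {V : Type*} [AddCommGroup V] [Module F V] {φ ψ : Mel F →ₗ[F] V}
    (h : ∀ k < 125, φ (e k) = ψ (e k)) : φ = ψ := by
  refine LinearMap.ext fun v => ?_
  induction v using Mel_induction with
  | hadd u v hu hv => rw [map_add, map_add, hu, hv]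
  | hsmul c u hu => rw [map_smul, map_smul, hu]
  | hbas s a b hs ha hb =>
    rw [← e_code ha hb]
    exact h _ (by omega)

lemma eq_sum_e (v : Mel F) : v = ∑ k ∈ Finset.range 125, co k v • e k := by
  have : (LinearMap.id : Mel F →ₗ[F] Mel F) =
      ∑ k ∈ Finset.range 125, (co k).smulRight (e k) := by
    refine ext_e fun l hl => ?_
    simp only [LinearMap.id_apply, LinearMap.sum_apply, LinearMap.smulRight_apply]
    rw [Finset.sum_congr rfl fun k hk => by rw [co_e (Finset.mem_range.1 hk) hl]]
    simp [hl]
  simpa using LinearMap.congr_fun this v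

lemma x1D1_eq : (x1D1 : Mel F) = bas 1 1 0 := by
  simp [x1D1, ιW, bas, inj, X_eq_mon]

lemma x2D2_eq : (x2D2 : Mel F) = bas 2 0 1 := by
  simp [x2D2, ιW, bas, inj, X_eq_mon]

lemma brM_add_left (u v w : Mel F) : brM (u + v) w = brM u w + brM v w :=
  LinearMap.map_add₂ brB u v w

lemma brM_smul_left (c : F) (u v : Mel F) : brM (c • u) v = c • brM u v :=
  LinearMap.map_smul₂ brB c u v

/-- `v` has weight `(p, q)` under the torus spanned by `x₁D₁` and `x₂D₂`. -/
def IsWt (p q : ℕ) (v : Mel F) : Prop :=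
  brM x1D1 v = (p : F) • v ∧ brM x2D2 v = (q : F) • v

lemma IsWt.smul {p q : ℕ} {u : Mel F} (c : F) (hu : IsWt p q u) : IsWt p q (c • u) := by
  constructor
  · rw [brM_smul_right, hu.1, smul_comm]
  · rw [brM_smul_right, hu.2, smul_comm]

lemma IsWt.add {p q : ℕ} {u v : Mel F} (hu : IsWt p q u) (hv : IsWt p q v) : IsWt p q (u + v) := by
  constructor
  · rw [brM_add_right, hu.1, hv.1, smul_add]
  · rw [brM_add_right, hu.2, hv.2, smul_add]

lemma isWt_zero (p q : ℕ) : IsWt p q (0 : Mel F) := by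
  constructor
  · rw [smul_zero]; exact map_zero (brB x1D1)
  · rw [smul_zero]; exact map_zero (brB x2D2)

section
variable [CharP F 5]

lemma brM_x1D1_bas {s : ℕ} (hs : s < 5) (a b : ℕ) :
    brM x1D1 (bas s a b : Mel F) = ((a + sh1 s : ℕ) : F) • bas s a b := by
  rw [x1D1_eq, brM_bas _ _ _ _ _ _ (by norm_num) hs]
  interval_cases s <;> simp [brFold, sh1, add_comm]

lemma brM_x2D2_bas {s : ℕ} (hs : s < 5) (a b : ℕ) :
    brM x2D2 (bas s a b : Mel F) = ((b + sh2 s : ℕ) : F) • bas s a b := by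
  rw [x2D2_eq, brM_bas _ _ _ _ _ _ (by norm_num) hs]
  interval_cases s <;> simp [brFold, sh2, add_comm]

lemma comp_brM_x1D1 {s : ℕ} (hs : s < 5) (v : Mel F) (i : Idx) :
    comp s (brM x1D1 v) i = ((i.1.val + sh1 s : ℕ) : F) * comp s v i := by
  induction v using Mel_induction with
  | hadd u v hu hv => simp only [brM_add_right, map_add, Pi.add_apply, hu, hv, mul_add]
  | hsmul c u hu =>
    simp only [brM_smul_right, map_smul, Pi.smul_apply, smul_eq_mul, hu, mul_left_comm]
  | hbas t a b ht ha hb =>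
    rw [brM_x1D1_bas ht, map_smul, bas, comp_inj hs ht]
    split_ifs with h
    · subst h
      simp only [Pi.smul_apply, mon, smul_eq_mul]
      split_ifs with h'
      · rw [h'.1]
      · simp
    · simp

lemma comp_brM_x2D2 {s : ℕ} (hs : s < 5) (v : Mel F) (i : Idx) :
    comp s (brM x2D2 v) i = ((i.2.val + sh2 s : ℕ) : F) * comp s v i := by
  induction v using Mel_induction with
  | hadd u v hu hv => simp only [brM_add_right, map_add, Pi.add_apply, hu, hv, mul_add]
  | hsmul c u hu =>
    simp only [brM_smul_right, map_smul, Pi.smul_apply, smul_eq_mul, hu, mul_left_comm]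
  | hbas t a b ht ha hb =>
    rw [brM_x2D2_bas ht, map_smul, bas, comp_inj hs ht]
    split_ifs with h
    · subst h
      simp only [Pi.smul_apply, mon, smul_eq_mul]
      split_ifs with h'
      · rw [h'.2]
      · simp
    · simp

lemma cast_congr {p p' : ℕ} (h : p % 5 = p' % 5) : (p : F) = p' :=
  CharP.natCast_eq_natCast' F 5 h

lemma IsWt.congr {p p' q q' : ℕ} (hp : p % 5 = p' % 5) (hq : q % 5 = q' % 5) {v : Mel F}
    (h : IsWt p q v) : IsWt p' q' v := by
  rw [IsWt, ← cast_congr hp, ← cast_congr hq]; exact h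

lemma isWt_bas {s : ℕ} (hs : s < 5) (a b : ℕ) : IsWt (a + sh1 s) (b + sh2 s) (bas s a b : Mel F) :=
  ⟨brM_x1D1_bas hs a b, brM_x2D2_bas hs a b⟩

lemma isWt_e {k : ℕ} (hk : k < 125) : IsWt (wt1 k) (wt2 k) (e k : Mel F) :=
  isWt_bas (show k / 25 < 5 by omega) _ _

lemma brM_derivation (h u v : Mel F) : brM h (brM u v) = brM (brM h u) v + brM u (brM h v) := by
  have := brM_jacobi h u v
  rw [brM_skew (brM u v) h, brM_skew (brM v h) u, brM_skew v h] at this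
  have h2 : brM u (-brM h v) = -brM u (brM h v) := map_neg (brB u) _
  rw [h2] at this
  rw [← sub_eq_zero, ← neg_eq_zero, ← this]; abel

lemma IsWt.brM {p q p' q' : ℕ} {u v : Mel F} (hu : IsWt p q u) (hv : IsWt p' q' v) :
    IsWt (p + p') (q + q') (brM u v) := by
  constructor
  · rw [brM_derivation, hu.1, hv.1, brM_smul_left, brM_smul_right, Nat.cast_add, add_smul]
  · rw [brM_derivation, hu.2, hv.2, brM_smul_left, brM_smul_right, Nat.cast_add, add_smul]

lemma IsWt.comp_eq_zero {p q s : ℕ} {v : Mel F} (hv : IsWt p q v) (hs : s < 5) (i : Idx)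
    (hi : ¬ (i.1.val = ex1 s p ∧ i.2.val = ex2 s q)) : comp s v i = 0 := by
  have h1 := comp_brM_x1D1 hs v i
  have h2 := comp_brM_x2D2 hs v i
  rw [hv.1, map_smul, Pi.smul_apply, smul_eq_mul, ← sub_eq_zero, ← sub_mul] at h1
  rw [hv.2, map_smul, Pi.smul_apply, smul_eq_mul, ← sub_eq_zero, ← sub_mul] at h2
  by_contra hc
  rw [eq_ex1_iff i.1.isLt, eq_ex2_iff i.2.isLt] at hi
  have h1' := (mul_eq_zero.1 h1).resolve_right hc
  have h2' := (mul_eq_zero.1 h2).resolve_right hc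
  rw [sub_eq_zero, CharP.natCast_eq_natCast F 5] at h1' h2'
  exact hi ⟨h1'.symm, h2'.symm⟩

lemma isWt_of_comp {p q : ℕ} {v : Mel F} (hv : ∀ s < 5, ∀ i : Idx,
    ¬ (i.1.val = ex1 s p ∧ i.2.val = ex2 s q) → comp s v i = 0) : IsWt p q v := by
  have key (u w : Mel F) (h : ∀ s < 5, ∀ i : Idx, comp s u i = comp s w i) : u = w := by
    rw [eq_sum_inj_comp u, eq_sum_inj_comp w]
    exact Finset.sum_congr rfl fun s hs =>
      congrArg (inj s) (funext (h s (Finset.mem_range.1 hs)))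
  constructor
  · refine key _ _ fun s hs i => ?_
    rw [comp_brM_x1D1 hs, map_smul, Pi.smul_apply, smul_eq_mul]
    by_cases h : i.1.val = ex1 s p ∧ i.2.val = ex2 s q
    · rw [cast_congr ((eq_ex1_iff i.1.isLt).1 h.1)]
    · rw [hv s hs i h, mul_zero, mul_zero]
  · refine key _ _ fun s hs i => ?_
    rw [comp_brM_x2D2 hs, map_smul, Pi.smul_apply, smul_eq_mul]
    by_cases h : i.1.val = ex1 s p ∧ i.2.val = ex2 s q
    · rw [cast_congr ((eq_ex2_iff i.2.isLt).1 h.2)]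
    · rw [hv s hs i h, mul_zero, mul_zero]

lemma IsWt.eq_sum {p q : ℕ} {v : Mel F} (hv : IsWt p q v) :
    v = ∑ s ∈ Finset.range 5, kc s p q v • bas s (ex1 s p) (ex2 s q) := by
  conv_lhs => rw [eq_sum_inj_comp v]
  refine Finset.sum_congr rfl fun s hs => ?_
  rw [bas, ← inj_smul]
  congr 1
  funext i
  simp only [kc, mon, LinearMap.comp_apply, LinearMap.proj_apply, Pi.smul_apply, smul_eq_mul]
  split_ifs with h
  · rw [mul_one]
    exact congrArg _ (Prod.ext (Fin.ext h.1) (Fin.ext h.2))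
  · rw [mul_zero, hv.comp_eq_zero (Finset.mem_range.1 hs) i h]

end

end Coordinates

section Propagation

/-- The bit number `u` of the mask `m`; it records that the unknown number `u` vanishes. -/
def getBit (m u : ℕ) : Bool := Nat.beq (Nat.land (Nat.shiftRight m u) 1) 1

/-- Sets the bit number `u` of the mask `m`. -/
def setBit (m u : ℕ) : ℕ := Nat.lor m (Nat.shiftLeft 1 u)

/-- Adds `c` times the unknown `u` to a linear form, a list of pairs (coefficient, unknown). -/
def insTerm (c u : ℕ) (l : List (ℕ × ℕ)) : List (ℕ × ℕ) :=
  List.rec [(c, u)] (fun t l r => bif Nat.beq t.2 u then (Nat.add c t.1, u) :: l else t :: r) l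

/-- Adds `c` times the unknown `u` to a linear form, unless `u` is known to vanish. -/
def addTerm (m c u : ℕ) (l : List (ℕ × ℕ)) : List (ℕ × ℕ) :=
  bif getBit m u then l else insTerm c u l

/-- If exactly one term of the linear form `l` has nonzero coefficient modulo `5`, then the unknown
in that term is marked as vanishing. -/
def single (l : List (ℕ × ℕ)) (m : ℕ) : ℕ :=
  List.rec m (fun t l r => bif Nat.beq (Nat.mod t.1 5) 0 then r else
    bif l.all (fun t' => Nat.beq (Nat.mod t'.1 5) 0) then setBit m t.2 else m) l

/-- Processes the equations `eq · c` for `c` in a list one after the other. The recursion on the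
mask forces its evaluation. -/
def propagate (eq : ℕ → ℕ → List (ℕ × ℕ)) (m : ℕ) (l : List ℕ) : ℕ :=
  List.rec (fun m => m) (fun c _ r m => Nat.rec (r (single (eq 0 c) 0))
    (fun n _ => r (single (eq (Nat.succ n) c) (Nat.succ n))) m) l m

/-- Sets all bits in a list. -/
def setAll (m : ℕ) (l : List ℕ) : ℕ :=
  List.rec (fun m => m) (fun c _ r m => Nat.rec (r (setBit 0 c))
    (fun n _ => r (setBit (Nat.succ n) c)) m) l m

lemma getBit_eq (m u : ℕ) : getBit m u = m.testBit u := by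
  change Nat.beq (m >>> u &&& 1) 1 = (1 &&& m >>> u != 0)
  rw [Nat.and_comm 1, Nat.and_one_is_mod]
  rcases Nat.mod_two_eq_zero_or_one (m >>> u) with h | h <;> rw [h] <;> rfl

lemma getBit_zero (u : ℕ) : getBit 0 u = false := by
  rw [getBit_eq, Nat.zero_testBit]

lemma getBit_setBit (m u v : ℕ) : getBit (setBit m u) v = (getBit m v || decide (u = v)) := by
  rw [getBit_eq, getBit_eq]
  change (m ||| (1 <<< u)).testBit v = _
  rw [Nat.testBit_or, Nat.one_shiftLeft, Nat.testBit_two_pow]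

lemma propagate_cons (eq : ℕ → ℕ → List (ℕ × ℕ)) (m c : ℕ) (l : List ℕ) :
    propagate eq m (c :: l) = propagate eq (single (eq m c) m) l := by
  cases m <;> rfl

lemma setAll_cons (m c : ℕ) (l : List ℕ) : setAll m (c :: l) = setAll (setBit m c) l := by
  cases m <;> rfl

variable {V : Type*} [AddCommGroup V] [Module F V]

/-- The value of a linear form. -/
def evalT (F : Type*) [Field F] [Module F V] (val : ℕ → V) (l : List (ℕ × ℕ)) : V :=
  (l.map fun t => (t.1 : F) • val t.2).sum

lemma evalT_cons (val : ℕ → V) (t : ℕ × ℕ) (l : List (ℕ × ℕ)) :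
    evalT F val (t :: l) = (t.1 : F) • val t.2 + evalT F val l := by
  simp [evalT]

lemma evalT_insTerm (val : ℕ → V) (c u : ℕ) (l : List (ℕ × ℕ)) :
    evalT F val (insTerm c u l) = (c : F) • val u + evalT F val l := by
  induction l with
  | nil => simp [insTerm, evalT]
  | cons t l ih =>
    change evalT F val (bif Nat.beq t.2 u then (Nat.add c t.1, u) :: l
      else t :: insTerm c u l) = _
    cases h : Nat.beq t.2 u with
    | true =>
      rw [cond_true, evalT_cons, evalT_cons, Nat.eq_of_beq_eq_true h, Nat.add_eq, Nat.cast_add,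
        add_smul, add_assoc]
    | false => rw [cond_false, evalT_cons, evalT_cons, ih, add_left_comm]

lemma evalT_addTerm {val : ℕ → V} {m : ℕ} (hm : ∀ u, getBit m u = true → val u = 0) (c u : ℕ)
    (l : List (ℕ × ℕ)) : evalT F val (addTerm m c u l) = (c : F) • val u + evalT F val l := by
  rw [addTerm]
  cases h : getBit m u with
  | true => rw [cond_true, hm u h, smul_zero, zero_add]
  | false => rw [cond_false, evalT_insTerm]

lemma setBit_sound {val : ℕ → V} {m : ℕ} (hm : ∀ u, getBit m u = true → val u = 0) {v : ℕ}
    (hv : val v = 0) : ∀ u, getBit (setBit m v) u = true → val u = 0 := by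
  intro u hu
  rw [getBit_setBit, Bool.or_eq_true, decide_eq_true_eq] at hu
  rcases hu with hu | rfl
  · exact hm u hu
  · exact hv

lemma setAll_sound {val : ℕ → V} {m : ℕ} (hm : ∀ u, getBit m u = true → val u = 0) {l : List ℕ}
    (hl : ∀ u ∈ l, val u = 0) : ∀ u, getBit (setAll m l) u = true → val u = 0 := by
  induction l generalizing m with
  | nil => exact hm
  | cons c l ih =>
    rw [setAll_cons]
    exact ih (setBit_sound hm (hl c (by simp))) fun u hu => hl u (by simp [hu])

lemma natCast_eq_zero_of_beq [CharP F 5] {n : ℕ} (h : Nat.beq (Nat.mod n 5) 0 = true) :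
    (n : F) = 0 :=
  (CharP.cast_eq_zero_iff F 5 n).2 (Nat.dvd_of_mod_eq_zero (Nat.eq_of_beq_eq_true h))

lemma evalT_eq_zero_of_all [CharP F 5] (val : ℕ → V) {l : List (ℕ × ℕ)}
    (h : l.all (fun t => Nat.beq (Nat.mod t.1 5) 0) = true) : evalT F val l = 0 := by
  refine List.sum_eq_zero fun v hv => ?_
  obtain ⟨t, ht, rfl⟩ := List.mem_map.1 hv
  rw [natCast_eq_zero_of_beq (List.all_eq_true.1 h t ht), zero_smul]

lemma single_sound [CharP F 5] {val : ℕ → V} {m : ℕ} (hm : ∀ u, getBit m u = true → val u = 0)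
    {l : List (ℕ × ℕ)} (hl : evalT F val l = 0) :
    ∀ u, getBit (single l m) u = true → val u = 0 := by
  induction l with
  | nil => exact hm
  | cons t l ih =>
    rw [evalT_cons] at hl
    change ∀ u, getBit (bif Nat.beq (Nat.mod t.1 5) 0 then single l m else
      bif l.all (fun t' => Nat.beq (Nat.mod t'.1 5) 0) then setBit m t.2 else m) u = true → _
    cases h : Nat.beq (Nat.mod t.1 5) 0 with
    | true =>
      rw [natCast_eq_zero_of_beq h, zero_smul, zero_add] at hl
      exact ih hl
    | false =>
      cases h' : l.all (fun t' => Nat.beq (Nat.mod t'.1 5) 0) with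
      | true =>
        rw [evalT_eq_zero_of_all val h', add_zero, smul_eq_zero] at hl
        refine setBit_sound hm (hl.resolve_left fun h0 => ?_)
        have := Nat.mod_eq_zero_of_dvd ((CharP.cast_eq_zero_iff F 5 t.1).1 h0)
        exact Bool.false_ne_true (h.symm.trans (Nat.beq_eq ▸ this))
      | false => exact hm

lemma propagate_sound [CharP F 5] {val : ℕ → V} {eq : ℕ → ℕ → List (ℕ × ℕ)}
    (heq : ∀ m c, (∀ u, getBit m u = true → val u = 0) → evalT F val (eq m c) = 0) {m : ℕ}
    (hm : ∀ u, getBit m u = true → val u = 0) (l : List ℕ) :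
    ∀ u, getBit (propagate eq m l) u = true → val u = 0 := by
  induction l generalizing m with
  | nil => exact hm
  | cons c l ih =>
    rw [propagate_cons]
    exact ih (single_sound hm (heq m c hm))

end Propagation

section Equations

/-- Adds to the linear form `l` the kind `w` coordinate of `c [e x, v]`, where `v` is the unknown
`u + s` times the monomial of kind `s` and weight `(p, q)`. -/
def outerKind (m c u x p q w s : ℕ) (l : List (ℕ × ℕ)) : List (ℕ × ℕ) :=
  brFold (fun n v a b r => bif Nat.beq v w && Nat.ble a 4 && Nat.ble b 4 then
      addTerm m (Nat.mul c n) (Nat.add u s) r else r) l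
    (Nat.div x 25) (Nat.mod (Nat.div x 5) 5) (Nat.mod x 5) s (ex1 s p) (ex2 s q)

/-- Adds to the linear form `l` the kind `w` coordinate of `c [e x, v]`, where `v` has weight
`(p, q)` and coordinates the unknowns `u, …, u + 4`. -/
def outer (m c u x p q w : ℕ) (l : List (ℕ × ℕ)) : List (ℕ × ℕ) :=
  outerKind m c u x p q w 0 (outerKind m c u x p q w 1 (outerKind m c u x p q w 2
    (outerKind m c u x p q w 3 (outerKind m c u x p q w 4 l))))

/-- Adds to the linear form `l` the kind `s` coordinate of `c f([e x, e y], e z)`. -/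
def inner (m c x y z s : ℕ) (l : List (ℕ × ℕ)) : List (ℕ × ℕ) :=
  brFold (fun n v a b r => bif Nat.ble a 4 && Nat.ble b 4 then
      let k := Nat.add (Nat.mul v 25) (Nat.add (Nat.mul a 5) b)
      bif Nat.ble (Nat.succ k) z then
        addTerm m (Nat.mul c n) (Nat.add (Nat.mul (Nat.add (Nat.mul k 125) z) 5) s) r
      else bif Nat.beq k z then r else
        addTerm m (Nat.mul 4 (Nat.mul c n)) (Nat.add (Nat.mul (Nat.add (Nat.mul z 125) k) 5) s) r
      else r) l
    (Nat.div x 25) (Nat.mod (Nat.div x 5) 5) (Nat.mod x 5)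
    (Nat.div y 25) (Nat.mod (Nat.div y 5) 5) (Nat.mod y 5)

/-- The summand `c [e x, f(e y, e z)]` of the cocycle equation, in the coordinate of kind `w`. -/
def outerPair (m c x y z w : ℕ) (l : List (ℕ × ℕ)) : List (ℕ × ℕ) :=
  outer m c (Nat.mul (Nat.add (Nat.mul y 125) z) 5) x (Nat.add (wt1 y) (wt1 z))
    (Nat.add (wt2 y) (wt2 z)) w l

/-- The kind `s` coordinate of the cocycle equation at `e x, e y, e z`. -/
def cocycleForm (m x y z s : ℕ) : List (ℕ × ℕ) :=
  outerPair m 1 x y z s (outerPair m 4 y x z s (outerPair m 1 z x y s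
    (inner m 4 x y z s (inner m 1 x z y s (inner m 4 y z x s [])))))

/-- The cocycle equation encoded by the number `c`. -/
def cocycleEqn (m c : ℕ) : List (ℕ × ℕ) :=
  cocycleForm m (Nat.mod (Nat.div c 78125) 125) (Nat.mod (Nat.div c 625) 125)
    (Nat.mod (Nat.div c 5) 125) (Nat.mod c 5)

/-- Adds to the linear form `l` the kind `s` coordinate of `c g([e x, e y])`. -/
def innerDer (m c x y s : ℕ) (l : List (ℕ × ℕ)) : List (ℕ × ℕ) :=
  brFold (fun n v a b r => bif Nat.ble a 4 && Nat.ble b 4 then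
      addTerm m (Nat.mul c n)
        (Nat.add (Nat.mul (Nat.add (Nat.mul v 25) (Nat.add (Nat.mul a 5) b)) 5) s) r
      else r) l
    (Nat.div x 25) (Nat.mod (Nat.div x 5) 5) (Nat.mod x 5)
    (Nat.div y 25) (Nat.mod (Nat.div y 5) 5) (Nat.mod y 5)

/-- The kind `s` coordinate of the derivation equation at `e x, e y`. -/
def derForm (m x y s : ℕ) : List (ℕ × ℕ) :=
  outer m 1 (Nat.mul y 5) x (wt1 y) (wt2 y) s (outer m 4 (Nat.mul x 5) y (wt1 x) (wt2 x) s
    (innerDer m 4 x y s []))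

/-- The derivation equation encoded by the number `c`. -/
def derEqn (m c : ℕ) : List (ℕ × ℕ) :=
  derForm m (Nat.mod (Nat.div c 625) 125) (Nat.mod (Nat.div c 5) 125) (Nat.mod c 5)

/-- If `e x` and `e y` are known to lie in a subalgebra, then so does `[e x, e y]`. -/
def genForm (m x y : ℕ) : List (ℕ × ℕ) :=
  bif getBit m x && getBit m y then
    brFold (fun n v a b r => bif Nat.ble a 4 && Nat.ble b 4 then
        addTerm m n (Nat.add (Nat.mul v 25) (Nat.add (Nat.mul a 5) b)) r else r) []
      (Nat.div x 25) (Nat.mod (Nat.div x 5) 5) (Nat.mod x 5)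
      (Nat.div y 25) (Nat.mod (Nat.div y 5) 5) (Nat.mod y 5)
  else []

/-- The instance of `genForm` encoded by the number `c`. -/
def genEqn (m c : ℕ) : List (ℕ × ℕ) :=
  genForm m (Nat.mod (Nat.div c 125) 125) (Nat.mod c 125)

/-- The coordinates of a weight zero bilinear map. -/
def valCo (f : Mel F →ₗ[F] Mel F →ₗ[F] Mel F) (u : ℕ) : F :=
  kc (u % 5) (wt1 (u / 625) + wt1 (u / 5 % 125)) (wt2 (u / 625) + wt2 (u / 5 % 125))
    (f (e (u / 625)) (e (u / 5 % 125)))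

/-- A bilinear map `f` has weight zero. -/
def WtZero (f : Mel F →ₗ[F] Mel F →ₗ[F] Mel F) : Prop :=
  ∀ i < 125, ∀ j < 125, IsWt (wt1 i + wt1 j) (wt2 i + wt2 j) (f (e i) (e j))

/-- Alternating two-cocycles of `M` with values in the adjoint representation. -/
def IsCocycle (f : Mel F →ₗ[F] Mel F →ₗ[F] Mel F) : Prop :=
  (∀ x, f x x = 0) ∧ ∀ x y z, brM x (f y z) - brM y (f x z) + brM z (f x y)
    - f (brM x y) z + f (brM x z) y - f (brM y z) x = 0

lemma IsCocycle.skew {f : Mel F →ₗ[F] Mel F →ₗ[F] Mel F} (hf : IsCocycle f) (x y : Mel F) :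
    f x y = -f y x := by
  have := hf.1 (x + y)
  rw [map_add, map_add, LinearMap.add_apply, LinearMap.add_apply, hf.1, hf.1, zero_add,
    add_zero, add_comm] at this
  exact eq_neg_of_add_eq_zero_left this

lemma valCo_code (f : Mel F →ₗ[F] Mel F →ₗ[F] Mel F) (i : ℕ) {j s : ℕ} (hj : j < 125)
    (hs : s < 5) : valCo f ((i * 125 + j) * 5 + s) =
      kc s (wt1 i + wt1 j) (wt2 i + wt2 j) (f (e i) (e j)) := by
  have h1 : ((i * 125 + j) * 5 + s) / 625 = i := by omega
  have h2 : ((i * 125 + j) * 5 + s) / 5 % 125 = j := by omega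
  have h3 : ((i * 125 + j) * 5 + s) % 5 = s := by omega
  rw [valCo, h1, h2, h3]

/-- The coordinates of a weight zero linear map. -/
def valDer (g : Mel F →ₗ[F] Mel F) (u : ℕ) : F :=
  kc (u % 5) (wt1 (u / 5)) (wt2 (u / 5)) (g (e (u / 5)))

lemma valDer_code (g : Mel F →ₗ[F] Mel F) (i : ℕ) {s : ℕ} (hs : s < 5) :
    valDer g (i * 5 + s) = kc s (wt1 i) (wt2 i) (g (e i)) := by
  have h1 : (i * 5 + s) / 5 = i := by omega
  have h2 : (i * 5 + s) % 5 = s := by omega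
  rw [valDer, h1, h2]

variable [CharP F 5]

lemma brM_e {x y : ℕ} (hx : x < 125) (hy : y < 125) :
    brM (e x) (e y : Mel F) = brFold (fun n k p q r => (n : F) • bas k p q + r) 0
      (x / 25) (x / 5 % 5) (x % 5) (y / 25) (y / 5 % 5) (y % 5) :=
  brM_bas _ _ _ _ _ _ (by omega) (by omega)

lemma evalT_outerKind {val : ℕ → F} {m : ℕ} (hm : ∀ u, getBit m u = true → val u = 0)
    {x s w : ℕ} (hx : x < 125) (hs : s < 5) (hw : w < 5) {p q P Q : ℕ}
    (hP : P % 5 = (wt1 x + p) % 5) (hQ : Q % 5 = (wt2 x + q) % 5) (c u : ℕ) (l : List (ℕ × ℕ)) :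
    evalT F val (outerKind m c u x p q w s l) =
      c * kc w P Q (brM (e x) (val (u + s) • bas s (ex1 s p) (ex2 s q))) + evalT F val l := by
  have h1 : (ex1 s p + sh1 s) % 5 = p % 5 := (eq_ex1_iff (ex1_lt s p)).1 rfl
  have h2 : (ex2 s q + sh2 s) % 5 = q % 5 := (eq_ex2_iff (ex2_lt s q)).1 rfl
  change P % 5 = (x / 5 % 5 + sh1 (x / 25) + p) % 5 at hP
  change Q % 5 = (x % 5 + sh2 (x / 25) + q) % 5 at hQ
  rw [brM_smul_right, map_smul, smul_eq_mul, e, brM_bas _ _ _ _ _ _ (by omega) hs]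
  refine brFold_rel (fun r r' => evalT F val r = c * (val (u + s) * kc w P Q r') + evalT F val l)
    _ _ _ _ _ _ (by simp) fun n k a b r r' hk hn hr => ?_
  have hkey : (n : F) * kc w P Q (bas k a b : Mel F) =
      if (k = w ∧ a ≤ 4) ∧ b ≤ 4 then (n : F) else 0 := by
    rw [kc_bas hw hk]
    rcases hn with rfl | ⟨ha, hb⟩
    · simp
    · rw [mul_ite, mul_one, mul_zero]
      refine if_congr ⟨?_, ?_⟩ rfl rfl
      · rintro ⟨rfl, rfl, rfl⟩
        exact ⟨⟨rfl, Nat.le_of_lt_succ (ex1_lt _ _)⟩, Nat.le_of_lt_succ (ex2_lt _ _)⟩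
      · rintro ⟨⟨rfl, ha'⟩, hb'⟩
        change _ = (x / 5 % 5 + sh1 (x / 25) + (ex1 s p + sh1 s)) % 5 at ha
        change _ = (x % 5 + sh2 (x / 25) + (ex2 s q + sh2 s)) % 5 at hb
        refine ⟨rfl, (eq_ex1_iff (by omega)).2 (by omega), (eq_ex2_iff (by omega)).2 (by omega)⟩
  have hc : (Nat.beq k w && Nat.ble a 4 && Nat.ble b 4) = decide ((k = w ∧ a ≤ 4) ∧ b ≤ 4) := by
    rw [Bool.eq_iff_iff]; simp [Nat.ble_eq]
  rw [hc, map_add, map_smul, smul_eq_mul, hkey]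
  by_cases h : (k = w ∧ a ≤ 4) ∧ b ≤ 4
  · rw [decide_eq_true h, cond_true, evalT_addTerm hm, hr, if_pos h, Nat.mul_eq, Nat.cast_mul,
      smul_eq_mul, Nat.add_eq]
    ring
  · rw [decide_eq_false h, cond_false, hr, if_neg h, zero_add]

lemma evalT_outer {val : ℕ → F} {m : ℕ} (hm : ∀ u, getBit m u = true → val u = 0)
    {x w : ℕ} (hx : x < 125) (hw : w < 5) {p q P Q : ℕ}
    (hP : P % 5 = (wt1 x + p) % 5) (hQ : Q % 5 = (wt2 x + q) % 5) (c u : ℕ) (l : List (ℕ × ℕ))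
    {v : Mel F} (hv : IsWt p q v) (hval : ∀ s < 5, val (u + s) = kc s p q v) :
    evalT F val (outer m c u x p q w l) = c * kc w P Q (brM (e x) v) + evalT F val l := by
  have h (s : ℕ) (hs : s < 5) (l : List (ℕ × ℕ)) := evalT_outerKind hm hx hs hw hP hQ c u l
  conv_rhs => rw [hv.eq_sum]
  simp only [outer, h _ (show 0 < 5 by norm_num), h _ (show 1 < 5 by norm_num),
    h _ (show 2 < 5 by norm_num), h _ (show 3 < 5 by norm_num), h _ (show 4 < 5 by norm_num)]
  rw [Finset.sum_range_succ, Finset.sum_range_succ, Finset.sum_range_succ, Finset.sum_range_succ,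
    Finset.sum_range_one, brM_add_right, brM_add_right, brM_add_right, brM_add_right, map_add,
    map_add, map_add, map_add, hval 0 (by norm_num), hval 1 (by norm_num), hval 2 (by norm_num),
    hval 3 (by norm_num), hval 4 (by norm_num)]
  ring

lemma evalT_outerPair {f : Mel F →ₗ[F] Mel F →ₗ[F] Mel F} (hf : WtZero f) {m : ℕ}
    (hm : ∀ u, getBit m u = true → valCo f u = 0) {x y z w : ℕ} (hx : x < 125) (hy : y < 125)
    (hz : z < 125) (hw : w < 5) {P Q : ℕ} (hP : P % 5 = (wt1 x + (wt1 y + wt1 z)) % 5)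
    (hQ : Q % 5 = (wt2 x + (wt2 y + wt2 z)) % 5) (c : ℕ) (l : List (ℕ × ℕ)) :
    evalT F (valCo f) (outerPair m c x y z w l) =
      c * kc w P Q (brM (e x) (f (e y) (e z))) + evalT F (valCo f) l :=
  evalT_outer hm hx hw hP hQ _ _ _ (hf y hy z hz) fun _ hs => valCo_code f y hz hs

lemma wt_code {k a b : ℕ} (ha : a ≤ 4) (hb : b ≤ 4) :
    wt1 (k * 25 + (a * 5 + b)) = a + sh1 k ∧ wt2 (k * 25 + (a * 5 + b)) = b + sh2 k := by
  have h1 : (k * 25 + (a * 5 + b)) / 25 = k := by omega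
  have h2 : (k * 25 + (a * 5 + b)) / 5 % 5 = a := by omega
  have h3 : (k * 25 + (a * 5 + b)) % 5 = b := by omega
  constructor
  · change (k * 25 + (a * 5 + b)) / 5 % 5 + sh1 ((k * 25 + (a * 5 + b)) / 25) = _
    rw [h1, h2]
  · change (k * 25 + (a * 5 + b)) % 5 + sh2 ((k * 25 + (a * 5 + b)) / 25) = _
    rw [h1, h3]

lemma evalT_inner {f : Mel F →ₗ[F] Mel F →ₗ[F] Mel F} (hf : IsCocycle f) {m : ℕ}
    (hm : ∀ u, getBit m u = true → valCo f u = 0) {x y z s : ℕ} (hx : x < 125) (hy : y < 125)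
    (hz : z < 125) (hs : s < 5) {P Q : ℕ} (hP : P % 5 = (wt1 x + wt1 y + wt1 z) % 5)
    (hQ : Q % 5 = (wt2 x + wt2 y + wt2 z) % 5) (c : ℕ) (l : List (ℕ × ℕ)) :
    evalT F (valCo f) (inner m c x y z s l) =
      c * kc s P Q (f (brM (e x) (e y)) (e z)) + evalT F (valCo f) l := by
  rw [brM_e hx hy]
  refine brFold_rel (fun r r' => evalT F (valCo f) r =
    c * kc s P Q (f r' (e z)) + evalT F (valCo f) l)
    _ _ _ _ _ _ (by simp) fun n k a b r r' hk hn hr => ?_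
  rw [map_add, LinearMap.add_apply, map_add, map_smul, LinearMap.smul_apply, map_smul, smul_eq_mul]
  have hc : (Nat.ble a 4 && Nat.ble b 4) = decide (a ≤ 4 ∧ b ≤ 4) := by
    rw [Bool.eq_iff_iff]; simp [Nat.ble_eq]
  rw [hc]
  by_cases h : a ≤ 4 ∧ b ≤ 4
  swap
  · rw [decide_eq_false h, cond_false, hr, bas_eq_zero (by omega), map_zero, LinearMap.zero_apply,
      map_zero, mul_zero, zero_add]
  rw [decide_eq_true h, cond_true, ← e_code (by omega) (by omega)]
  have hwt := wt_code (k := k) h.1 h.2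
  have hlt : k * 25 + (a * 5 + b) < 125 := by omega
  simp only [Nat.add_eq, Nat.mul_eq]
  generalize k * 25 + (a * 5 + b) = j at hwt hlt ⊢
  have hval : (n : F) * kc s P Q (f (e j) (e z)) =
      n * kc s (wt1 j + wt1 z) (wt2 j + wt2 z) (f (e j) (e z)) := by
    rcases hn with rfl | ⟨ha, hb⟩
    · simp
    · change _ = (wt1 x + wt1 y) % 5 at ha
      change _ = (wt2 x + wt2 y) % 5 at hb
      rw [kc_congr s (show P % 5 = (wt1 j + wt1 z) % 5 by omega)
        (show Q % 5 = (wt2 j + wt2 z) % 5 by omega)]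
  rw [hval]
  rcases lt_trichotomy j z with hjz | rfl | hjz
  · rw [Nat.ble_eq_true_of_le (Nat.succ_le_of_lt hjz), cond_true, evalT_addTerm hm, hr,
      valCo_code f j hz hs, smul_eq_mul, Nat.cast_mul]
    ring
  · have h1 : Nat.ble (Nat.succ j) j = false := by
      rw [← Bool.not_eq_true, Nat.ble_eq]; omega
    rw [h1, cond_false, Nat.beq_refl, cond_true, hr, hf.1, map_zero]
    ring
  · have h1 : Nat.ble (Nat.succ j) z = false := by
      rw [← Bool.not_eq_true, Nat.ble_eq]; omega
    have h2 : Nat.beq j z = false := by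
      rw [← Bool.not_eq_true, Nat.beq_eq]; omega
    have h4 : ((4 : ℕ) : F) = -1 := by
      rw [eq_neg_iff_add_eq_zero]; exact_mod_cast CharP.cast_eq_zero F 5
    rw [h1, h2, cond_false, cond_false, evalT_addTerm hm, hr, valCo_code f z hlt hs,
      hf.skew (e z), smul_eq_mul, Nat.cast_mul, h4, Nat.cast_mul, map_neg, add_comm (wt1 z),
      add_comm (wt2 z)]
    ring

lemma evalT_cocycleEqn {f : Mel F →ₗ[F] Mel F →ₗ[F] Mel F} (hf : IsCocycle f) (hf' : WtZero f)
    (m c : ℕ) (hm : ∀ u, getBit m u = true → valCo f u = 0) :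
    evalT F (valCo f) (cocycleEqn m c) = 0 := by
  have key {x y z s : ℕ} (hx : x < 125) (hy : y < 125) (hz : z < 125) (hs : s < 5) :
      evalT F (valCo f) (cocycleForm m x y z s) = 0 := by
    have h4 : ((4 : ℕ) : F) = -1 := by
      rw [eq_neg_iff_add_eq_zero]; exact_mod_cast CharP.cast_eq_zero F 5
    have := congrArg (kc s (wt1 x + wt1 y + wt1 z) (wt2 x + wt2 y + wt2 z))
      (hf.2 (e x) (e y) (e z))
    rw [map_sub, map_add, map_sub, map_add, map_sub, map_zero] at this
    rw [cocycleForm,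
      evalT_outerPair hf' hm hx hy hz hs (P := wt1 x + wt1 y + wt1 z)
        (Q := wt2 x + wt2 y + wt2 z) (by congr 1; ring) (by congr 1; ring),
      evalT_outerPair hf' hm hy hx hz hs (P := wt1 x + wt1 y + wt1 z)
        (Q := wt2 x + wt2 y + wt2 z) (by congr 1; ring) (by congr 1; ring),
      evalT_outerPair hf' hm hz hx hy hs (P := wt1 x + wt1 y + wt1 z)
        (Q := wt2 x + wt2 y + wt2 z) (by congr 1; ring) (by congr 1; ring),
      evalT_inner hf hm hx hy hz hs (P := wt1 x + wt1 y + wt1 z)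
        (Q := wt2 x + wt2 y + wt2 z) (by congr 1) (by congr 1),
      evalT_inner hf hm hx hz hy hs (P := wt1 x + wt1 y + wt1 z)
        (Q := wt2 x + wt2 y + wt2 z) (by congr 1; ring) (by congr 1; ring),
      evalT_inner hf hm hy hz hx hs (P := wt1 x + wt1 y + wt1 z)
        (Q := wt2 x + wt2 y + wt2 z) (by congr 1; ring) (by congr 1; ring), h4]
    simp only [evalT, List.map_nil, List.sum_nil]
    push_cast
    linear_combination this
  exact key (Nat.mod_lt _ (by norm_num)) (Nat.mod_lt _ (by norm_num)) (Nat.mod_lt _ (by norm_num))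
    (Nat.mod_lt _ (by norm_num))

lemma evalT_innerDer (g : Mel F →ₗ[F] Mel F) {m : ℕ}
    (hm : ∀ u, getBit m u = true → valDer g u = 0) {x y s : ℕ} (hx : x < 125) (hy : y < 125)
    (hs : s < 5) (c : ℕ) (l : List (ℕ × ℕ)) :
    evalT F (valDer g) (innerDer m c x y s l) =
      c * kc s (wt1 x + wt1 y) (wt2 x + wt2 y) (g (brM (e x) (e y))) + evalT F (valDer g) l := by
  rw [brM_e hx hy]
  refine brFold_rel (fun r r' => evalT F (valDer g) r =
    c * kc s (wt1 x + wt1 y) (wt2 x + wt2 y) (g r') + evalT F (valDer g) l)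
    _ _ _ _ _ _ (by simp) fun n k a b r r' hk hn hr => ?_
  rw [map_add, map_add, map_smul, map_smul, smul_eq_mul]
  have hc : (Nat.ble a 4 && Nat.ble b 4) = decide (a ≤ 4 ∧ b ≤ 4) := by
    rw [Bool.eq_iff_iff]; simp [Nat.ble_eq]
  rw [hc]
  by_cases h : a ≤ 4 ∧ b ≤ 4
  swap
  · rw [decide_eq_false h, cond_false, hr, bas_eq_zero (by omega), map_zero, map_zero, mul_zero,
      zero_add]
  rw [decide_eq_true h, cond_true, ← e_code (by omega) (by omega)]
  have hwt := wt_code (k := k) h.1 h.2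
  simp only [Nat.add_eq, Nat.mul_eq]
  generalize k * 25 + (a * 5 + b) = j at hwt ⊢
  rw [evalT_addTerm hm, hr, valDer_code g j hs, smul_eq_mul, Nat.cast_mul]
  rcases hn with rfl | ⟨ha, hb⟩
  · simp
  · change _ = (wt1 x + wt1 y) % 5 at ha
    change _ = (wt2 x + wt2 y) % 5 at hb
    rw [kc_congr s (show wt1 j % 5 = (wt1 x + wt1 y) % 5 by omega)
      (show wt2 j % 5 = (wt2 x + wt2 y) % 5 by omega)]
    ring

lemma evalT_derEqn {g : Mel F →ₗ[F] Mel F} (hg : ∀ x y, cob g x y = 0)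
    (hg' : ∀ i < 125, IsWt (wt1 i) (wt2 i) (g (e i)))
    (m c : ℕ) (hm : ∀ u, getBit m u = true → valDer g u = 0) :
    evalT F (valDer g) (derEqn m c) = 0 := by
  have key {x y s : ℕ} (hx : x < 125) (hy : y < 125) (hs : s < 5) :
      evalT F (valDer g) (derForm m x y s) = 0 := by
    have h4 : ((4 : ℕ) : F) = -1 := by
      rw [eq_neg_iff_add_eq_zero]; exact_mod_cast CharP.cast_eq_zero F 5
    have := congrArg (kc s (wt1 x + wt1 y) (wt2 x + wt2 y)) (hg (e x) (e y))
    rw [cob, map_sub, map_sub, map_zero] at this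
    rw [derForm, Nat.mul_eq, Nat.mul_eq,
      evalT_outer hm hx hs (P := wt1 x + wt1 y) (Q := wt2 x + wt2 y) rfl rfl _ _ _ (hg' y hy)
        fun _ hs => valDer_code g y hs,
      evalT_outer hm hy hs (P := wt1 x + wt1 y) (Q := wt2 x + wt2 y) (by rw [add_comm])
        (by rw [add_comm]) _ _ _ (hg' x hx) fun _ hs => valDer_code g x hs,
      evalT_innerDer g hm hx hy hs, h4]
    simp only [evalT, List.map_nil, List.sum_nil]
    push_cast
    linear_combination this
  exact key (Nat.mod_lt _ (by norm_num)) (Nat.mod_lt _ (by norm_num)) (Nat.mod_lt _ (by norm_num))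

lemma evalT_genEqn {K : Submodule F (Mel F)} (hK : ∀ x ∈ K, ∀ y ∈ K, brM x y ∈ K) (m c : ℕ)
    (hm : ∀ u, getBit m u = true → K.mkQ (e u) = 0) :
    evalT F (fun u => K.mkQ (e u)) (genEqn m c) = 0 := by
  have key {x y : ℕ} (hx : x < 125) (hy : y < 125) :
      evalT F (fun u => K.mkQ (e u)) (genForm m x y) = 0 := by
    rw [genForm]
    cases h : getBit m x && getBit m y with
    | false => rfl
    | true =>
      rw [Bool.and_eq_true] at h
      have hb : K.mkQ (brM (e x) (e y)) = 0 := by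
        have hx := hm _ h.1
        have hy := hm _ h.2
        rw [Submodule.mkQ_apply, Submodule.Quotient.mk_eq_zero] at hx hy ⊢
        exact hK _ hx _ hy
      rw [cond_true, ← hb, brM_e hx hy]
      refine brFold_rel (fun r r' => evalT F (fun u => K.mkQ (e u)) r = K.mkQ r')
        _ _ _ _ _ _ (by simp [evalT]) fun n k a b r r' hk hn hr => ?_
      rw [map_add, map_smul, ← hr]
      have hc : (Nat.ble a 4 && Nat.ble b 4) = decide (a ≤ 4 ∧ b ≤ 4) := by
        rw [Bool.eq_iff_iff]; simp [Nat.ble_eq]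
      rw [hc]
      by_cases h : a ≤ 4 ∧ b ≤ 4
      · rw [decide_eq_true h, cond_true, evalT_addTerm hm, Nat.add_eq, Nat.mul_eq, Nat.add_eq,
          Nat.mul_eq, e_code (by omega) (by omega)]
      · rw [decide_eq_false h, cond_false, bas_eq_zero (by omega), map_zero, smul_zero, zero_add]
  exact key (Nat.mod_lt _ (by norm_num)) (Nat.mod_lt _ (by norm_num))

end Equations

section Certificates

set_option maxRecDepth 100000

/-- Pairs of basis elements whose successive brackets generate `M`. -/
def genList : List ℕ :=
  [9475, 12375, 12475, 12500, 12524, 49, 74, 75, 6150, 6175, 6200, 6269, 6273, 6294, 6298, 6324,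
  6344, 6349, 9275, 9325, 9350, 9418, 9419, 9422, 9444, 12518, 12522, 12543, 12569, 12573, 12588,
  12589, 12592, 14, 23, 72, 88, 89, 92, 113, 114, 1650, 1675, 1775, 2137, 2175, 2225, 3133, 3134,
  3137, 3141, 3163, 3164, 3167, 3188, 3189, 3192, 3213, 3214, 3217, 3234, 3238, 3247, 5925, 5975,
  6253, 6257, 6261, 6266, 6271, 6283, 6287, 6292, 6296, 6308, 6312, 6317, 6322, 6333, 6337, 6342,
  6346, 6354, 6358, 6363, 6367, 6372, 9377, 9378, 9379, 9381, 9385, 9390, 9407, 9408, 9409, 9411,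
  9420, 9432, 9441, 12502, 12503, 12504, 12506, 12510, 12515, 12520, 12527, 12535, 12540, 12545,
  12557, 12571, 11, 31, 35, 76, 105, 3160, 3181, 3210, 3231]

/-- Encoded derivation equations, to be solved one after the other. -/
def derList : List ℕ :=
  [9, 28, 658, 1122, 1196, 1366, 1748, 1791, 1987, 3340, 3507, 6637, 16002, 16126, 47376, 47377,
  128, 878, 6, 16127, 8, 875, 155, 502, 406, 38, 185, 436, 68, 215, 466, 98, 245, 496]

/-- Gauge coordinates of weight-zero two-cochains. -/
def gaugeList : List ℕ :=
  [47313, 9128, 24128, 47340, 47374, 47454, 17876, 47420, 14127, 47432, 47471, 47424, 46627,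
  34752, 47353, 5377, 47460, 27254, 46004, 47266, 22877, 47485, 14753, 47310, 378, 29128, 377,
  31000, 47414, 36628, 47428, 6629, 21003, 47384, 42879, 42876, 22252, 23502, 47344, 47295, 44128,
  47355, 41627, 37877, 47448, 37252, 26004, 12250, 15378, 47465, 1627, 47397, 14128, 34128, 15376,
  47422, 47490, 9752, 16000, 26628, 5379, 20375, 6625, 27879, 30376, 27251, 41002, 47434, 35376,
  47303, 25376, 33501, 47329, 47315, 44751, 34127, 5375, 8503, 24753, 47486, 12879, 15375, 47405,
  47436, 46003, 22876, 42250, 17875, 47453, 12876, 47331, 47354, 47362, 45379, 47412, 40379,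
  39127, 47394, 34750, 27250, 47278, 47494, 47290, 39750, 47488, 47473, 47294, 47349, 9129, 17878,
  47390, 47320, 27876, 47477, 47273, 47440, 47301, 32878, 1629, 47304, 34129, 44754, 47363, 47492,
  47462, 32253, 47274, 42875, 44753, 29753, 2875, 47489, 47479, 10376, 7877, 47449, 47447, 44750,
  47258, 43502, 47443, 36626, 32250, 20378, 47495, 13501, 19126, 43503, 39752, 7254, 33503, 47472,
  42252, 27877, 34751, 47288, 22253, 10379, 11002, 6628, 47402, 16001, 17250, 47468, 6001, 47265,
  24129, 35375, 47403, 22250, 46000, 25378, 4126, 47445, 36629, 47461, 47392, 19752, 375, 47484,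
  47410, 37879, 19750, 41001, 47467, 19753, 25375, 41003, 44129, 38501, 47256, 29127, 40375, 9125,
  29129, 47480, 14125, 7253, 47476, 27875, 47325, 47341, 47260, 47482, 18501, 47308, 19751, 23504,
  47433, 47318, 46628, 9126, 24125, 30379, 47296, 32875, 47498, 4128, 47400, 47389, 12251, 47299,
  47356, 47305, 47496, 47268, 16628, 31004, 36001, 12253, 27253, 38504, 6004, 46625, 47283, 22878,
  43500, 41626, 47365, 2251, 12254, 14754, 47291, 31001, 11629, 6626, 28504, 13502, 32251, 47425,
  47271, 47255, 7876, 7251, 47407, 37878, 44752, 42254, 5378, 27252, 11628, 29126, 34754, 47293,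
  28501, 47417, 4750, 15377, 11626, 8500, 47261, 29751, 7875, 41000, 19128, 1626, 7252, 379,
  47493, 47375, 18500, 12875, 47306, 7878, 47358, 3504, 44125, 47457, 39125, 40376, 21626, 47286,
  26003, 38503, 33502, 47463, 47438, 47314, 41628, 2878, 4127, 47478, 26626, 31625, 47451, 38502,
  2253, 4125, 39126, 47381, 46626, 1628, 47435, 14126, 47499, 47456, 47398, 37875, 3500, 29125,
  47386, 47368, 3502, 47396, 47437, 35377, 29754, 47300, 47323, 13500, 47455, 45376, 31626, 2876,
  2877, 3501, 24126, 21628, 47416, 8501, 47281, 14751, 47393, 47366, 21629, 11003, 9127, 43501,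
  47351, 6002, 47452, 47339, 47421, 1000, 40377, 44127, 26001, 47458, 47483, 14750, 47378, 47423,
  40378, 4752, 47413, 10378, 47427, 47376, 39753, 35378, 33500, 21001, 44126, 46002, 31003, 12878,
  47497, 47415, 36004, 47385, 47371, 47275, 47444, 36625, 39751, 27878, 46629, 20376, 36002,
  34125, 41004, 47418, 47280, 47298, 45378, 47382, 23501, 39129, 47430, 47426, 47487, 47263,
  31628, 7879, 38500, 47380, 47360, 10375, 41625, 37876, 47429, 47411, 42878, 15379, 47470, 47481,
  1004, 39754, 17251, 2250, 37250, 30378, 47475, 36003, 47431, 35379, 1001, 1003, 9751, 47441,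
  23503, 47370, 376, 6003, 47361, 28503, 37253, 9753, 47383, 13503, 4751, 29750, 47391, 42251,
  14129, 32876, 34126, 47395, 47311, 47491, 11000, 47373, 45377, 11001, 47466, 36000, 46001,
  47408, 47326, 47469, 42253, 47442, 4753, 47446, 47401, 43504, 11004, 47406, 47350, 47450, 37251,
  41629, 6627, 47388, 37254, 5376, 45375, 3503, 39128, 34753, 34875, 53626, 43627, 55501, 41750,
  62376, 41753, 13627, 4879, 63040, 44875, 22378, 63114, 12376, 2378, 48625, 49875, 27379, 63109,
  4251, 11751, 26125, 18003, 37376, 45502, 26128, 38625, 39251, 29878, 63035, 21125, 41128, 503,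
  36127, 15501, 1752, 25500, 33629, 43629, 11754, 63048, 41754, 4250, 60500, 29252, 61125, 51750,
  50503, 63047, 31127, 39875, 11750, 48001, 51128, 14252, 41751, 12377, 63089, 30504, 59251,
  39878, 5500, 4876, 40502, 54250, 62375, 24253, 45501, 62378, 63095, 13003, 63123, 52376, 46753,
  23628, 26753, 28001, 9253, 63107, 49876, 9875, 25504, 7376, 3628, 10500, 63030, 26750, 33000,
  63094, 29253, 24878, 39250, 42376, 17378, 34250, 61126, 28000, 58001, 40503, 54251, 19879,
  61753, 36754, 36751, 12375, 30500, 11128, 11125, 13626, 1126, 34254, 32375, 12378, 15502, 40501,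
  41125, 6125, 63032, 502, 51751, 63020, 44250, 15503, 31126, 63105, 37375, 63104, 6753, 44878,
  22379, 5503, 46125, 63124, 11753, 63110, 14876, 36125, 45503, 44253, 63120, 4253, 14253, 37996,
  37374, 41124]

/-- Cocycle equations, in the order in which they are solved. -/
def stepList : List ℕ :=
  [16002, 125497, 203622, 331002, 431747, 437998, 453026, 822372, 828624, 906749, 984874, 1062999,
  1141124, 1212997, 1606751, 2000487, 2000499, 2016198, 2016248, 2078612, 2078620, 2094256,
  2094271, 2156728, 2156737, 2156745, 2234870, 2234873, 2312995, 2469249, 3166124, 3172304,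
  3328564, 3406694, 3953604, 3953612, 3953617, 3953620, 3953621, 3953624, 4187999, 4344177,
  4344202, 4344227, 4344237, 4344245, 4344246, 5125495, 5128620, 5131745, 5141249, 5907371,
  5907996, 5908621, 5909246, 5909871, 5910496, 5911121, 5911746, 5912371, 5919239, 5921751,
  5921752, 5921757, 5921762, 5921767, 5921772, 5921777, 5921782, 5921787, 5921792, 5921797,
  5921813, 5921834, 47372, 47373, 47374, 47376, 111747, 116121, 119246, 129248, 140526, 140544,
  140553, 140578, 189247, 207373, 218651, 218664, 296776, 296784, 374901, 374904, 428622, 434871,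
  434872, 437999, 441123, 447373, 453008, 453024, 516123, 516124, 531144, 531151, 594249, 609264,
  609276, 672374, 687384, 687401, 750498, 750499, 765526, 843651, 843654, 921776, 999901, 1078026,
  1984752, 1984876, 1991126, 1994251, 1997376, 2000477, 2000482, 2000497, 2000498, 2016148,
  2016219, 2016223, 2065499, 2141002, 2156748, 2297252, 2547374, 2796778, 3941002, 3953609,
  3953619, 4344193, 4344217, 4344232, 4344242, 4671779, 4734873, 5907995, 5921851, 7798025,
  7798650, 7799275, 7799900, 7800530, 7800535, 7800540, 7800545, 7800550, 7800555, 7800560,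
  7800565, 111121, 112371, 140506, 140511, 140516, 140576, 140581, 140586, 350495, 428620, 741120,
  819245, 2000495, 2068624, 2078621, 2148624, 2226124, 2303624, 2781747, 3094245, 3172372,
  3562997, 4344182, 4344187, 4344247, 4734872, 4734874, 4749924, 5125497, 5907373, 5910498,
  5913623, 5921829, 779, 878, 884, 1404, 1509, 2029, 2654, 3278, 3383, 6403, 6508, 9633, 12758,
  16004, 17025, 17130, 17650, 31124, 32200, 34752, 47302, 47342, 47347, 63046, 79871, 80499,
  80779, 81124, 82372, 85497, 88622, 91403, 91747, 93267, 93271, 93296, 93321, 93346, 93371,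
  93384, 93393, 93418, 93443, 93468, 93493, 93497, 93621, 93622, 93623, 93649, 93674, 93699,
  93724, 93749, 93998, 94119, 94251, 95498, 96124, 96745, 96748, 97140, 97373, 97426, 97999,
  99248, 99873, 100496, 101124, 102373, 102996, 102998, 103621, 104249, 105498, 106121, 106123,
  106746, 107374, 107999, 108623, 109246, 109248, 110498, 111748, 114873, 116122, 117997, 117998,
  119247, 121122, 121123, 122372, 122996, 123624, 124247, 124248, 125462, 125467, 125477, 127995,
  127996, 129872, 131120, 131121, 131122, 132373, 132997, 134245, 134246, 134247, 134248, 135498,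
  136122, 137371, 137372, 137373, 138623, 139247, 140517, 140542, 140548, 140554, 140567, 140570,
  140573, 140579, 140592, 140598, 140604, 140623, 141249, 158865, 161121, 161990, 164168, 164246,
  165115, 167026, 167371, 168240, 168276, 168381, 170152, 170496, 170776, 170797, 170822, 170847,
  170872, 170881, 170981, 170988, 170989, 171016, 171041, 171044, 171066, 171069, 171091, 171094,
  171116, 171119, 171121, 171122, 171141, 171142, 171166, 171167, 171191, 171192, 171216, 171217,
  171241, 171242, 171243, 171246, 175359, 175440, 175566, 175615, 175620, 178621, 179249, 180496,
  180499, 181746, 183621, 184871, 185498, 186746, 186748, 188615, 188690, 189248, 190498, 191002,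
  192373, 193621, 193623, 194247, 195498, 196746, 196748, 197372, 197373, 197998, 199871, 199873,
  200497, 200498, 201123, 202996, 202998, 203542, 203639, 211748, 214873, 216120, 217998, 218653,
  218678, 218679, 218694, 218703, 218704, 218719, 218744, 236989, 239486, 240114, 242611, 242614,
  245496, 245736, 248241, 248277, 248290, 248310, 248335, 248339, 248364, 248382, 248476, 248517,
  248536, 248537, 248542, 248561, 248562, 248567, 248586, 248587, 248611, 248612, 248617, 248647,
  248660, 248672, 248685, 248710, 248722, 248735, 248737, 248747, 251124, 253352, 253563, 263381,
  266611, 272372, 275497, 278621, 278622, 281767, 289248, 292373, 295498, 296793, 318231, 320732,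
  321356, 323857, 324481, 325742, 325746, 325807, 325808, 325832, 325833, 325834, 325844, 325857,
  325858, 325859, 325869, 325949, 325974, 325986, 325991, 325999, 326022, 326032, 326034, 326047,
  326055, 326057, 326059, 326072, 326080, 326082, 326084, 326105, 326107, 326155, 326180, 326181,
  326205, 326206, 326230, 326231, 326233, 326238, 331751, 331776, 331806, 331831, 362957, 366686,
  376176, 376201, 394874, 396124, 397371, 400497, 403383, 403623, 406123, 409738, 409751, 415497,
  415880, 415888, 416120, 416122, 417370, 417999, 418378, 418478, 418622, 420498, 422249, 422252,
  425503, 429248, 430498, 431748, 434873, 436123, 437370, 438622, 439247, 447374, 449874, 450482,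
  450497, 450499, 451120, 451122, 451747, 453110, 475776, 476121, 481102, 484876, 487975, 488105,
  490218, 490369, 500377, 501230, 516118, 531225, 578502, 578626, 656627, 669253, 713581, 713601,
  713707, 713727, 788901, 789334, 791402, 791747, 794246, 794247, 794526, 794872, 797252, 797877,
  798502, 800338, 800452, 800455, 806122, 809873, 810498, 812877, 813095, 814249, 823623, 828622,
  828677, 828678, 829872, 837995, 837997, 837999, 839247, 844286, 868701, 868711, 875378, 875501,
  879873, 893624, 953502, 969127, 992376, 1062917, 1062937, 1187877, 1187879, 1203502, 1266004,
  1297297, 1344127, 1344129, 1423504, 1438003, 1500379, 1516126, 1531678, 1531751, 1581637,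
  1581667, 1609872, 1609977, 1611122, 1612997, 1614247, 1626166, 1626776, 1628661, 1688002,
  1688003, 1748504, 1750377, 1753502, 1766128, 1813001, 1828628, 1831753, 1891126, 1897372,
  1909752, 1922377, 1938013, 1970375, 1971000, 1971001, 1971625, 1972251, 1972252, 1972257,
  1972357, 1972376, 1976002, 1985375, 1985376, 1985377, 1985487, 1985500, 1985501, 1985561,
  1987252, 1995501, 1998626, 2000381, 2000382, 2000386, 2000387, 2000391, 2000392, 2000396,
  2000397, 2000402, 2000424, 2000430, 2000431, 2000436, 2000440, 2000441, 2000446, 2000450,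
  2000452, 2000457, 2000462, 2000465, 2000467, 2000472, 2000479, 2000490, 2000507, 2000517,
  2000522, 2000557, 2000562, 2000567, 2000572, 2000577, 2000582, 2000592, 2000597, 2000612,
  2000617, 2000622, 2003001, 2003026, 2014251, 2016151, 2016245, 2053502, 2059127, 2063572,
  2074876, 2078564, 2078609, 2079246, 2079872, 2090496, 2092372, 2156689, 2156734, 2211002,
  2234861, 2375376, 2469229, 2781717, 2784870, 2797498, 2798033, 2798663, 2859829, 2859844,
  3157381, 3157391, 3157401, 3172376, 3250501, 3406673, 3406684, 3562924, 3641044, 3641083,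
  3938501, 3943626, 3947375, 3948626, 3950377, 3950500, 3953516, 3953521, 3953530, 3953550,
  3953555, 3953556, 3953560, 3953565, 3953570, 3953595, 3953600, 3953605, 3953606, 3953610,
  3953615, 3953618, 3953652, 3953667, 3953672, 3953698, 3953702, 3953717, 3958626, 3959876,
  3960501, 3961126, 3968628, 3969256, 3969266, 3969285, 3969287, 3969290, 3969291, 3969301,
  3969316, 3969326, 3969341, 3969349, 3969351, 3969362, 3969366, 4099832, 4103628, 4109876,
  4127401, 4188000, 4266109, 4266119, 4336126, 4342376, 4344145, 4344180, 4344230, 4344243,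
  4344251, 4344298, 4344357, 4359253, 4666733, 4733001, 4734902, 4884876, 4906793, 4969189,
  5047319, 5219298, 5297418, 5516017, 5516118, 5672358, 5688043, 5907261, 5907382, 5907403,
  5907427, 5907449, 5907931, 5908001, 5908027, 5908069, 5908077, 5908613, 5908652, 5908668,
  5908689, 5909225, 5909251, 5909877, 5909927, 5910502, 5910557, 5911126, 5911710, 5911715,
  5911752, 5912335, 5912966, 5913002, 5913027, 5913077, 5913626, 5913627, 5913628, 5913649,
  5913707, 5913728, 5914252, 5914269, 5914277, 5914826, 5915509, 5915597, 5916127, 5916177,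
  5916229, 5916828, 5918093, 5918114, 5919277, 5919876, 5919877, 5919902, 5919928, 5920501,
  5920502, 5920527, 5922387, 5922406, 5922411, 5922414, 5922460, 5922465, 5922471, 5922472,
  5922482, 5922487, 5922497, 6000551, 6000601, 6000621, 6234914, 6313031, 6547411, 6703713,
  6938026, 7641231, 7719361, 7878657, 7878667, 113622, 114872, 140534, 396748, 1062996, 1297370,
  1453621, 1987877, 2222252, 2782371, 3157996, 3548621, 4109871, 4124889, 4124914, 4266123,
  4344207, 5516123, 5921753, 5921800, 5921803, 5999904, 31752, 47282, 47297, 47352, 63041, 63081,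
  119251, 125402, 125437, 125447, 125482, 141161, 141181, 141191, 141201, 141203, 141228, 141231,
  203562, 203607, 281662, 407877, 437882, 437884, 437889, 437894, 437899, 437957, 646003, 803502,
  882252, 945879, 1197252, 1276002, 1512252, 1591004, 1764251, 1843001, 1972377, 1985502, 1993001,
  2000407, 2000412, 2000417, 2000422, 2000444, 2000494, 2000502, 2016156, 2016172, 2078601,
  2078732, 2078742, 2219126, 2234952, 2234953, 2234989, 2313077, 2313102, 2531627, 2625477,
  2625482, 2625484, 2766002, 2781688, 2844127, 2922252, 2937928, 3172377, 3391002, 3578673,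
  3703502, 3734963, 3944127, 3947252, 3948001, 3953518, 3953543, 3953554, 3953568, 3953579,
  3969306, 3969331, 3969356, 4734793, 4734812, 5125392, 5125393, 5219348, 5516012, 5907968,
  5907993, 5908605, 5921809, 7797400, 1219246, 1609871, 2094318, 2625498, 2781746, 2796782,
  3016123, 4647372, 4727997, 4737998, 5125498, 5516124, 5921765, 5921790, 47272, 47357, 63071,
  63096, 112996, 140603, 325911, 1972877, 1976627, 1994127, 2000388, 2000413, 2000438, 2000489,
  2000493, 2078576, 2078707, 2078747, 2091751, 2313107, 2313109, 2767366, 3969348, 5909235,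
  5916859, 5917489, 5921808, 47377, 116120, 125495, 281746, 1053620, 1219245, 2469246, 2859871,
  4256747, 4422372, 4741123, 5912998, 5921754, 5921779, 5921804, 5921850, 802460, 2085501,
  2093626, 4734819, 5674152, 5674177, 5751652, 5751677, 325912, 325937, 325962, 326033, 326058,
  326083, 1669754, 2000478, 2078603, 3939752, 3969299, 4107992, 4110493, 4349878, 3626, 3729,
  14752, 16003, 16189, 18001, 23502, 24127, 26002, 28502, 31688, 32251, 47314, 47344, 47359,
  47364, 47369, 47482, 47497, 90501, 93626, 93973, 94094, 106004, 139876, 141192, 172254, 183504,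
  394629, 394803, 397053, 402252, 410218, 410369, 410378, 417753, 417858, 420377, 422244, 422253,
  423503, 424127, 424752, 425504, 436753, 437919, 437941, 437954, 437956, 437976, 437978, 437981,
  437983, 437988, 438028, 438097, 438107, 438117, 734754, 796526, 824253, 828578, 1031628,
  1109753, 1205377, 1594253, 1599253, 1687956, 1750277, 1906529, 1972331, 1975377, 1978500,
  1980375, 1980379, 1986000, 1986625, 1987250, 1996627, 2000393, 2074752, 2078563, 2078588,
  2144128, 2375527, 2391150, 2757126, 2773003, 2775378, 3016043, 3406700, 3469129, 3703504,
  3797300, 3859754, 3941121, 3943000, 3953661, 3953666, 3953673, 3953676, 3953686, 3953723,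
  3954229, 4187378, 4187930, 4656709, 5047298, 5047309, 5047424, 5203549, 5281669, 5437909,
  5437919, 5594149, 5672463, 5828519, 5907429, 5908704, 5909909, 2069246, 4726122, 4736748,
  4749944, 394873, 430495, 1766121, 5921755, 789248, 814245, 2075501, 2300377, 2328678, 2611837,
  2638088, 2144127, 4344204, 11627, 12252, 14127, 15377, 26627, 36126, 47292, 63121, 126129,
  175503, 203534, 250379, 297493, 328504, 438027, 487878, 594134, 656753, 922403, 1031627,
  1281627, 1297318, 1359752, 1422254, 1444253, 1453579, 1501004, 1578502, 1766090, 1844179,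
  1971751, 1979125, 1979750, 1981000, 1999752, 2000426, 2000435, 2000443, 2000480, 2000485,
  2000501, 2000512, 2001127, 2002377, 2003002, 2007377, 2008002, 2008627, 2009252, 2326751,
  2859783, 3859876, 3940376, 3946627, 3952375, 3953533, 3953678, 3956751, 3958001, 3965503,
  3966126, 3967376, 3969302, 3969312, 3969373, 3969374, 4031750, 4266178, 4344252, 4344277,
  4813001, 5063108, 5907378, 5908079, 5908608, 5909843, 5914279, 5922408, 447371, 453017, 473623,
  507370, 516121, 1375496, 4412997, 4739873, 5921780, 5921835, 194245, 906746, 975495, 984871,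
  5921805, 5921810, 4344212, 4344219, 9752, 2016224, 2224127, 3891203, 4344152, 10377, 47286,
  47311, 47427, 326004, 868379, 1991627, 1996751, 1997877, 2000398, 2000408, 2000473, 2078731,
  2146627, 2609751, 3000376, 3391001, 3941627, 3942877, 3944752, 3947877, 3949127, 3953528,
  3953553, 3953586, 3953679, 4578553, 4969153, 5750399, 5908603, 594246, 1297371, 5921785,
  5921830, 47370, 79873, 122995, 203621, 1687996, 5921760, 5921855, 2297376, 3406752, 3484877,
  3875502, 2001701, 2002326, 2078681, 2078746, 2241126, 3797377, 5908119, 5908739, 125507,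
  2000496, 1073, 3346, 3734, 3739, 3749, 23626, 25251, 25588, 26003, 26501, 31845, 33501, 33627,
  36002, 47266, 47308, 47358, 47447, 47483, 47488, 47498, 60503, 61128, 63099, 94873, 125461,
  125572, 266001, 351629, 395269, 396103, 425600, 428605, 437931, 487750, 790753, 801004, 826628,
  831778, 1062916, 1219140, 1734753, 1750378, 1971142, 1974126, 1987251, 2072370, 2093631,
  2093676, 2219253, 2375289, 2381629, 2769282, 2859949, 3156512, 3250496, 3250549, 3406777,
  3945375, 3946125, 3952876, 3953508, 3953726, 4266224, 5594234, 5916855, 5925613, 1998502,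
  2000383, 82998, 119870, 34753, 47316, 250501, 828509, 1047252, 1047378, 1141127, 1437877,
  1672252, 1922378, 1993500, 1998003, 2000418, 2000598, 2001126, 2001752, 2016230, 2016234,
  2016235, 2057876, 2063628, 2609750, 2922254, 3031858, 3564776, 3946626, 3953580, 3953590,
  3953703, 3969282, 3969352, 4124881, 4124901, 4344160, 4359984, 4734817, 5828703, 5908625,
  5909904, 4344197, 2094357, 3959253, 47378, 141153, 437935, 2016157, 4734871, 5914875, 5921763,
  47271, 47281, 734875, 1984126, 2000403, 2000583, 2169899, 2325501, 3156626, 3172393, 3953644,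
  3953683, 3953693, 2094336, 3078626, 31751, 47375, 656625, 812875, 1047250, 1437875, 1844135,
  2234926, 2244251, 2326126, 5909250, 4750609, 3953596, 15821, 394598, 425610, 428588, 446751,
  453747, 868504, 969126, 1144251, 1266003, 1359753, 1601628, 1977375, 1992250, 2000608, 2388503,
  2389128, 2772278, 3156522, 3939126, 3953640, 3953720, 3967375, 4344354, 4416003, 5911815,
  2016191, 2016216, 2094307, 2094372, 3969321, 4359921, 4750521, 7883724, 797998, 816749, 47346,
  1986001, 2000588, 3953719, 4659878, 5914900, 3253, 32878, 47291, 94128, 159514, 328629, 531803,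
  834878, 956129, 969254, 1187378, 1203625, 1344750, 1906750, 1999253, 2010501, 2016162, 2016167,
  2453501, 2703626, 2703709, 2922375, 3016189, 3969357, 4342377, 4750540, 5679878, 5922455,
  2016166, 2016209, 2016241, 2016246, 2094296, 2094346, 2094361, 4500496, 5921778, 1989127,
  3957378, 47276, 47466, 173501, 656629, 790158, 1109879, 1891000, 1988502, 2063748, 2075503,
  2094261, 2094266, 2687875, 3947377, 5911750, 6313026, 828627, 3969319, 5911125, 5914250,
  3964879, 7376, 1453626, 2000624, 3641149, 844357, 2313106, 3953669, 1194, 3487, 48628, 394528,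
  396504, 409640, 409645, 438071, 438106, 438121, 456783, 1203503, 1214128, 1516001, 1750502,
  1970501, 2000541, 2128403, 2531628, 2757403, 2922253, 3472251, 3952879, 3953685, 3953711,
  3953735, 4344364, 4344374, 4672421, 5063071, 5672377, 5750501, 5917378, 5918625, 6547423,
  2328677, 903, 3303, 95502, 203628, 425379, 453001, 491004, 1734544, 2078714, 2388523, 3947251,
  3963001, 3969337, 4491128, 5125623, 5359794, 5672379, 5925620, 6234893, 2093681, 6938098,
  244128, 266000, 141178, 346753, 438003, 500375, 2001751, 2002376, 3156751, 3949751, 4344248,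
  4344250, 4828748, 6078674, 6156794, 7881870, 5921788, 5910500, 1125500, 3156752, 3940502,
  3955504, 3959878, 3961753, 1657253, 425501, 1988000, 4344249, 1581003, 3943501, 4750539,
  5828627, 10376, 47410, 402878, 435375, 435377, 436000, 436002, 453697, 578501, 641128, 1519125,
  1979128, 2462376, 3953701, 5929953, 2641156, 396753, 2000509, 2306625, 5921750, 1189753,
  2012378, 3941017, 3941027, 3941052, 3941067, 3946002, 928, 46627, 47288, 47456, 63114, 91382,
  188001, 266127, 396458, 437898, 563001, 594250, 636004, 811128, 1203628, 1297375, 1741128,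
  1987377, 2009876, 2800599, 3949250, 3959298, 3969327, 5913650, 5919875, 5501, 3969292, 5930598,
  47371, 2234951, 2534752, 3316002, 4344179, 4656778, 4891121, 63105, 800875, 1297376, 3023629,
  3031833, 3781626, 5909875, 7406818, 2066627, 63021, 2766001, 2797398, 3312877, 3953564, 3953694,
  3969273, 3969274, 5203534, 5918628, 62378, 94253, 94254, 172378, 1969875, 3953648, 3953668,
  8250, 395778, 418375, 437928, 981628, 1266001, 1534876, 3951625, 3951629, 3953660, 4340377,
  5925582, 5925587, 18733, 63030, 94125, 82014, 95381, 134252, 426004, 672375, 1050363, 1891127,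
  1909775, 2004875, 3160503, 3256129, 3784752, 5359799, 5676778, 5922392, 3946752, 4438023,
  7878025, 1984252, 2231625, 3953563, 4734898, 274129, 713504, 1828500, 2391175, 2463003, 3094309,
  18487, 47307, 1982252, 5910555, 3328669, 3969334, 6313009, 1969987, 26001, 438088, 1366002,
  2000580, 3469128, 3953710, 5913026, 1997371, 3953559, 3953658, 2060500, 2015500, 2129879,
  3422483, 5922483, 899, 9751, 79639, 125519, 158379, 203508, 281759, 562876, 1050500, 1891025,
  1976628, 1999754, 2000535, 3250500, 3942879, 4342254, 3956128, 4737378, 2072875, 2228500,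
  196629, 797025, 2158000, 2384754, 3953744, 1219250, 2713629, 3953520, 5907387, 2688001, 2719278,
  3939252, 3266168, 3951002, 203513, 250504, 1033629, 1996752, 3968004, 4734875, 4734913, 5047379,
  47379, 404128, 437938, 1359751, 1500903, 2465501, 3945379, 3945377, 1974252, 2078706, 1976125,
  3719358, 4344220, 1519, 953501, 1701127, 1750504, 1969877, 2000595, 2234880, 3703625, 3969294,
  6304910, 2000433, 406626, 416500, 789528, 879, 31627, 2094332, 4109760, 5053004, 3238001,
  3953603, 172379, 800502, 1111129, 3941007, 3254, 408502, 429126, 3943627, 5914276, 17701,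
  2294250, 5359877, 2456627, 3109924, 16001, 20376, 23501, 36627, 47474, 966128, 992377, 1500376,
  1586128, 1975597, 1989875, 1992254, 3237879, 5919980, 47306, 3016126, 906656, 584875, 3862879,
  5683003, 16622, 797650, 1034751, 2000525, 2375332, 2391190, 5594188, 758, 136127, 563002,
  1531754, 1969626, 2067879, 2088626, 2547375, 2938000, 4187880, 4516157, 319253, 344250, 2231715,
  3963048, 3966173, 406752, 94751, 2078535, 1359954, 3953659, 4578626, 58000, 2313076, 3944322,
  5927423, 2796823, 14029, 816140, 1291754, 1981003, 2000458, 3958000, 4732877, 29753, 740503,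
  1375500, 5828623, 407251, 16626, 609905, 1766129, 5922412, 3719251, 3944751, 18481, 1266628,
  3547251, 3969369, 3953002, 2078625, 31661, 3875501, 2328702, 500500, 3550376, 3656793, 47323,
  844337, 3312878, 1500500, 2001129, 409791, 409942, 798275, 2078650, 3734984, 3958628, 5915501,
  1464875, 1989252, 1594125, 1982251, 5688089, 3714, 406855, 1737379, 3547377, 5375588, 45375,
  47489, 828661, 4891063, 5922480, 62377, 4734809, 1190378, 3244251, 407876, 1995376, 3706629,
  3953623, 3964876, 1228626, 3000501, 3547477, 47283, 4750569, 1284752, 813090, 1617411, 2000610,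
  3000503, 6859910, 1891754, 2322376, 4491127, 4728001, 3969368, 2156775, 3000502, 62376, 3941032,
  3953716, 59250, 3078726, 3969354, 2925379, 1922376, 1531750, 999911, 2010503, 1000537, 1047251,
  1734751, 2007375, 2847252, 6472410, 3952376, 712379, 433502, 437918, 1828404, 63092, 95875,
  1998627, 2246126, 63101, 3941626, 3951126, 63031, 3732378, 3942376, 432252, 2053629, 2234875,
  406483, 1375528, 3969258, 4344210, 1189879, 1989126, 2000555, 3941752, 3953690, 3969364,
  1597250, 972252, 2234966, 3961125, 5925567, 1995502, 4906163, 797876, 5925557, 1986751, 2016138,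
  3968003, 4344209, 6625540, 432875, 1973091, 3939251, 6938073, 16456, 31686, 63112, 3859879,
  2938001, 3608, 406857, 5922485, 406646, 1594029, 2078675, 766167, 47366, 1984251, 1982377,
  6469283, 4672419, 1656750, 1994754, 5921125, 11751, 1906626, 4656824, 3969342, 1656777, 2531754,
  3000378, 5750498, 719126, 438061, 2844251, 1141151, 1983003, 3953633, 3953745, 1266754, 3263,
  47484, 1344250, 1975529, 1989879, 3953635, 21626, 2000545, 3969259, 63039, 1688004, 47471,
  405131, 4813025, 2072254, 2703625, 3583, 41627, 1997876, 2078001, 5922470, 453071, 7875, 187876,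
  797251, 5922432, 63124, 3109278, 2453626, 3969284, 1190504, 1984964, 3797373, 3943002, 3336,
  47351, 11752, 1844246, 17376, 1975378, 2000550, 5919250, 1453625, 5921865, 2000513, 1993504,
  2013625, 3469254, 5907376, 2291125, 2691004, 553734, 3944877, 3500524, 109875, 2218000, 1994129,
  2016139, 5359876, 1621751, 31126, 2016210, 2922379, 3953695, 4344130, 5913625, 5916751, 5438024,
  5921126, 641126, 5930573, 2719324, 1814753, 1134253, 41002, 47278, 1978629, 2172466, 1906752,
  3954253, 1125376, 5909876, 5922427, 1998504, 5922416, 1989128, 2234991, 661751, 1187876,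
  1996128, 2016135, 737877, 5922492, 1422376, 3319128, 2001753, 2456629, 4364984, 453666, 503502,
  4359918, 1978503, 2000575, 2016160, 1973626, 2249251, 47368, 5438626, 45377, 5440504, 2144254,
  3949754, 5922462, 324879, 3859652, 5922407, 1997254, 2250617, 3968001, 3013626, 891125, 3784754,
  44127, 47303, 1986753, 172375, 4344215, 5913001, 5922452, 3966128, 3313004, 3031775, 38502,
  656750, 2131754, 1516127, 38501, 798501, 36752, 4578625, 49778, 2172491, 2156800, 2016140,
  2150379, 1441002, 56128, 1999753, 1984974, 2287878, 5829251, 2016220, 3006753, 3394129, 3333,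
  799751, 2000590, 197252, 5922391, 14876, 1422251, 2313050, 1053501, 47473, 1976753, 2306629,
  1531753, 4344190, 1980378, 1992253, 953626, 353502, 3406750, 969251, 14515, 1844250, 39126,
  4891125, 1063028, 1998503, 1734876, 1031751, 1998628, 3391129, 16236, 1437876, 3945378, 407200,
  3953715, 438058, 119126, 3952254, 3391003, 3234753, 1991628, 181752, 2016155, 1281626, 2922378,
  2016130, 5922381, 3953705, 922404, 3952253, 4813000, 6781776, 3951004, 3969340, 1984993, 33001,
  1999878, 438068, 6313066, 431126, 1128626, 2016190, 1047376, 3952379, 1500501, 8428, 1297378,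
  259625, 3078628, 3949879, 3969295, 3946003, 1988503, 2016170, 3946004, 1188626, 35377, 5922382,
  3953665, 656626, 47408, 2609753, 63089, 47493, 3955500, 4266125, 39751, 1063003, 1988629,
  1984919, 1992879, 1141128, 39752, 5922447, 5922417, 3958625, 2609879, 34252, 43502, 1996629,
  4969250, 2000570, 1109751, 3940504, 516128, 1977878, 6313056, 3000504, 47298, 5912376, 1844253,
  5922431, 344251, 1984646, 3343, 57378, 8379, 3625378, 21126, 1672251, 3953730, 63109, 3966750,
  1981129, 1993503, 338002, 1987378, 39251, 26126, 5916126, 47328, 1981628, 1672377, 1981754,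
  1996754, 1109876, 1993628, 6313021, 427876, 1978003, 337750, 344126, 2297378, 344252, 3424]

/-- The unknowns describing `f(e i, ·)` for `i` in a generating set. -/
def targetList : List ℕ :=
  [75, 99, 100].flatMap fun i => (List.range 125).flatMap fun j => bif Nat.beq i j then [] else
    [0, 1, 2, 3, 4].map fun s =>
      bif Nat.ble i j then (i * 125 + j) * 5 + s else (j * 125 + i) * 5 + s

lemma gen_check : (List.range 125).all
    (getBit (propagate genEqn (setAll 0 [75, 99, 100]) genList)) = true := by decide +kernel

lemma der_check : ([75, 99, 100].flatMap fun i => [0, 1, 2, 3, 4].map fun s => i * 5 + s).all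
    (getBit (propagate derEqn (setAll 0 [0, 1, 2, 3, 5]) derList)) = true := by decide +kernel

lemma cocycle_check : targetList.all
    (getBit (propagate cocycleEqn (setAll 0 gaugeList) stepList)) = true := by decide +kernel

end Certificates

section Vanishing

lemma brM_zero_right (u : Mel F) : brM u 0 = 0 := map_zero (brB u)

variable [CharP F 5]

/-- A subspace of `M` closed under the bracket and containing `D̃₁`, `D̃₂` and
`x₁⁴x₂⁴D̃₁` is all of `M`. -/
lemma mem_of_generators {K : Submodule F (Mel F)} (hK : ∀ x ∈ K, ∀ y ∈ K, brM x y ∈ K)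
    (h : ∀ i ∈ [75, 99, 100], e i ∈ K) (x : Mel F) : x ∈ K := by
  have h0 : ∀ u, getBit 0 u = true → K.mkQ (e u) = 0 := fun u hu => by simp [getBit_zero] at hu
  have hs := propagate_sound (eq := genEqn) (evalT_genEqn hK) (setAll_sound h0 fun u hu =>
    (Submodule.Quotient.mk_eq_zero K).2 (h u hu)) genList
  rw [eq_sum_e x]
  refine K.sum_mem fun k hk => K.smul_mem _ ?_
  exact (Submodule.Quotient.mk_eq_zero K).1
    (hs k (List.all_eq_true.1 gen_check k (List.mem_range.2 (Finset.mem_range.1 hk))))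

lemma IsWt.eq_zero {p q : ℕ} {v : Mel F} (hv : IsWt p q v) (h : ∀ s < 5, kc s p q v = 0) :
    v = 0 := by
  rw [hv.eq_sum]
  exact Finset.sum_eq_zero fun s hs => by rw [h s (Finset.mem_range.1 hs), zero_smul]

lemma derivation_eq_zero {g : Mel F →ₗ[F] Mel F} (hg : ∀ x y, cob g x y = 0)
    (hg' : ∀ i < 125, IsWt (wt1 i) (wt2 i) (g (e i)))
    (h : ∀ u ∈ [0, 1, 2, 3, 5], valDer g u = 0) : g = 0 := by
  have h0 : ∀ u, getBit 0 u = true → valDer g u = 0 := fun u hu => by simp [getBit_zero] at hu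
  have hs := propagate_sound (eq := derEqn) (evalT_derEqn hg hg') (setAll_sound h0 h) derList
  have hz : ∀ i ∈ [75, 99, 100], g (e i) = 0 := by
    intro i hi
    have hi' : i < 125 := by fin_cases hi <;> norm_num
    refine (hg' i hi').eq_zero fun s hs' => ?_
    rw [← valDer_code g i hs']
    refine hs _ (List.all_eq_true.1 der_check _ ?_)
    simp only [List.mem_flatMap, List.mem_map]
    exact ⟨i, hi, s, by interval_cases s <;> simp, rfl⟩
  refine LinearMap.ext fun x => LinearMap.mem_ker.1
    (mem_of_generators (K := LinearMap.ker g) (fun x hx y hy => ?_) (fun i hi => hz i hi) x)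
  rw [LinearMap.mem_ker] at hx hy ⊢
  have := hg x y
  rwa [cob, hx, hy, brM_zero_right, brM_zero_right, sub_self, zero_sub, neg_eq_zero] at this

lemma cocycle_eq_zero {f : Mel F →ₗ[F] Mel F →ₗ[F] Mel F} (hf : IsCocycle f) (hf' : WtZero f)
    (h : ∀ u ∈ gaugeList, valCo f u = 0) : f = 0 := by
  have h0 : ∀ u, getBit 0 u = true → valCo f u = 0 := fun u hu => by simp [getBit_zero] at hu
  have hs := propagate_sound (eq := cocycleEqn) (evalT_cocycleEqn hf hf') (setAll_sound h0 h)
    stepList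
  have hz : ∀ i ∈ [75, 99, 100], f (e i) = 0 := by
    intro i hi
    have hi' : i < 125 := by fin_cases hi <;> norm_num
    refine ext_e fun j hj => ?_
    rw [LinearMap.zero_apply]
    by_cases hij : i = j
    · rw [← hij, hf.1]
    have hmem (s : ℕ) (hs' : s < 5) :
        (bif Nat.ble i j then (i * 125 + j) * 5 + s else (j * 125 + i) * 5 + s) ∈ targetList := by
      simp only [targetList, List.mem_flatMap]
      refine ⟨i, hi, j, List.mem_range.2 hj, ?_⟩
      rw [show Nat.beq i j = false by rw [← Bool.not_eq_true, Nat.beq_eq]; exact hij, cond_false]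
      exact List.mem_map.2 ⟨s, by interval_cases s <;> simp, rfl⟩
    cases hb : Nat.ble i j with
    | true =>
      refine (hf' i hi' j hj).eq_zero fun s hs' => ?_
      rw [← valCo_code f i hj hs']
      have := hmem s hs'
      rw [hb, cond_true] at this
      exact hs _ (List.all_eq_true.1 cocycle_check _ this)
    | false =>
      rw [hf.skew, neg_eq_zero]
      refine (hf' j hj i hi').eq_zero fun s hs' => ?_
      rw [← valCo_code f j hi' hs']
      have := hmem s hs'
      rw [hb, cond_false] at this
      exact hs _ (List.all_eq_true.1 cocycle_check _ this)
  refine LinearMap.ext fun x => LinearMap.mem_ker.1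
    (mem_of_generators (K := LinearMap.ker f) (fun x hx y hy => ?_) (fun i hi => hz i hi) x)
  rw [LinearMap.mem_ker] at hx hy ⊢
  refine LinearMap.ext fun z => ?_
  have := hf.2 x y z
  rw [hf.skew (brM x z) y, hf.skew (brM y z) x, hx, hy] at this
  simpa only [LinearMap.zero_apply, brM_zero_right, sub_self, zero_add, zero_sub, neg_zero,
    add_zero, sub_zero, neg_eq_zero] using this

end Vanishing

section Cocycles

lemma IsCocycle.of_cyclic {f : Mel F →ₗ[F] Mel F →ₗ[F] Mel F} (hskew : ∀ x, f x x = 0)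
    (h : ∀ x y z, f (brM x y) z + f (brM y z) x + f (brM z x) y +
      (brM (f x y) z + brM (f y z) x + brM (f z x) y) = 0) : IsCocycle f := by
  refine ⟨hskew, fun x y z => ?_⟩
  have hs (x y : Mel F) : f x y = -f y x := by
    have := hskew (x + y)
    rw [map_add, map_add, LinearMap.add_apply, LinearMap.add_apply, hskew, hskew, zero_add,
      add_zero, add_comm] at this
    exact eq_neg_of_add_eq_zero_left this
  have hn (u v : Mel F) : brM u (-v) = -brM u v := map_neg (brB u) v
  have := h x y z
  rw [brM_skew x (f y z), brM_skew z (f x y), hs x z, hn, brM_skew y (f z x), brM_skew x z,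
    map_neg, LinearMap.neg_apply, ← neg_eq_zero, ← this]
  abel

/-- The coboundary of `g` as a bilinear map. -/
def cobB : (Mel F →ₗ[F] Mel F) →ₗ[F] Mel F →ₗ[F] Mel F →ₗ[F] Mel F where
  toFun g := brB.compl₂ g - (brB.compl₂ g).flip - brB.compr₂ g
  map_add' g g' := by
    refine LinearMap.ext₂ fun x y => ?_
    simp only [LinearMap.sub_apply, LinearMap.compl₂_apply, LinearMap.flip_apply,
      LinearMap.compr₂_apply, LinearMap.add_apply, map_add]
    abel
  map_smul' c g := by
    refine LinearMap.ext₂ fun x y => ?_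
    simp only [LinearMap.sub_apply, LinearMap.compl₂_apply, LinearMap.flip_apply,
      LinearMap.compr₂_apply, LinearMap.smul_apply, map_smul, RingHom.id_apply, smul_sub]

lemma cobB_apply (g : Mel F →ₗ[F] Mel F) (x y : Mel F) : cobB g x y = cob g x y := rfl

/-- The squaring of `ad h` as a bilinear map. -/
def sqB (h : Mel F) : Mel F →ₗ[F] Mel F →ₗ[F] Mel F :=
  ∑ k ∈ Finset.Icc 1 4, ((Nat.factorial k * Nat.factorial (5 - k) : ℕ) : F)⁻¹ •
    brB.compl₁₂ (brB h ^ k) (brB h ^ (5 - k))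

lemma sqB_apply (h x y : Mel F) : sqB h x y = melSq (brM h) x y := by
  simp only [sqB, melSq, LinearMap.sum_apply, LinearMap.smul_apply, LinearMap.compl₁₂_apply,
    Module.End.pow_apply, brB_apply]
  rfl

variable [CharP F 5]

lemma isCocycle_cobB (g : Mel F →ₗ[F] Mel F) : IsCocycle (cobB g) := by
  refine IsCocycle.of_cyclic (fun x => ?_) fun x y z => ?_
  · rw [cobB_apply, cob, brM_self, map_zero, sub_self, sub_zero]
  have hl (u v w : Mel F) : brM (u - v) w = brM u w - brM v w := LinearMap.map_sub₂ brB u v w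
  have h0 := congrArg g (brM_jacobi x y z)
  rw [map_add, map_add, map_zero] at h0
  simp only [cobB_apply, cob, hl]
  rw [brM_skew z (g (brM x y)), brM_skew x (g (brM y z)), brM_skew y (g (brM z x)),
    brM_skew y (g x), brM_skew z (g y), brM_skew x (g z)]
  have hn (u v : Mel F) : brM (-u) v = -brM u v := LinearMap.map_neg₂ brB u v
  simp only [hn]
  linear_combination (norm := module) brM_jacobi x y (g z) + brM_jacobi y z (g x) +
    brM_jacobi z x (g y) - h0

lemma melSq_eq (h x y : Mel F) : melSq (brM h) x y =
    -(brM (brM h x) (brM h (brM h (brM h (brM h y)))) +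
      (2 : F) • brM (brM h (brM h x)) (brM h (brM h (brM h y))) +
      (2 : F) • brM (brM h (brM h (brM h x))) (brM h (brM h y)) +
      brM (brM h (brM h (brM h (brM h x)))) (brM h y)) := by
  have h5 : (5 : F) = 0 := by exact_mod_cast CharP.cast_eq_zero F 5
  have h24 : ((24 : ℕ) : F)⁻¹ = -1 :=
    inv_eq_of_mul_eq_one_left (by push_cast; linear_combination -5 * h5)
  have h12 : ((12 : ℕ) : F)⁻¹ = -2 :=
    inv_eq_of_mul_eq_one_left (by push_cast; linear_combination -5 * h5)
  have e4 : Finset.Icc 1 4 = {1, 2, 3, 4} := rfl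
  rw [melSq, e4, Finset.sum_insert (by simp), Finset.sum_insert (by simp),
    Finset.sum_insert (by simp), Finset.sum_singleton]
  change ((24 : ℕ) : F)⁻¹ • brM (brM h x) (brM h (brM h (brM h (brM h y)))) +
    (((12 : ℕ) : F)⁻¹ • brM (brM h (brM h x)) (brM h (brM h (brM h y))) +
    (((12 : ℕ) : F)⁻¹ • brM (brM h (brM h (brM h x))) (brM h (brM h y)) +
      ((24 : ℕ) : F)⁻¹ • brM (brM h (brM h (brM h (brM h x)))) (brM h y))) = _
  rw [h24, h12]
  module

lemma melSq_brM_left {h x x1 x2 x3 x4 y y1 y2 y3 y4 z z1 z2 z3 z4 : Mel F} (hx1 : brM h x = x1)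
    (hx2 : brM h x1 = x2) (hx3 : brM h x2 = x3) (hx4 : brM h x3 = x4) (hy1 : brM h y = y1)
    (hy2 : brM h y1 = y2) (hy3 : brM h y2 = y3) (hy4 : brM h y3 = y4) (hz1 : brM h z = z1)
    (hz2 : brM h z1 = z2) (hz3 : brM h z2 = z3) (hz4 : brM h z3 = z4) :
    melSq (brM h) (brM x y) z = -(brM (brM x1 y) z4 + brM (brM x y1) z4 +
      (2 : F) • brM (brM x2 y) z3 + (4 : F) • brM (brM x1 y1) z3 + (2 : F) • brM (brM x y2) z3 +
      (2 : F) • brM (brM x3 y) z2 + (6 : F) • brM (brM x2 y1) z2 + (6 : F) • brM (brM x1 y2) z2 +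
      (2 : F) • brM (brM x y3) z2 + brM (brM x4 y) z1 + (4 : F) • brM (brM x3 y1) z1 +
      (6 : F) • brM (brM x2 y2) z1 + (4 : F) • brM (brM x1 y3) z1 + brM (brM x y4) z1) := by
  have hD {u u' v v' : Mel F} (hu : brM h u = u') (hv : brM h v = v') :
      brM h (brM u v) = brM u' v + brM u v' := by
    rw [brM_derivation, hu, hv]
  simp only [melSq_eq, hD hx1 hy1, hD hx1 hy2, hD hx1 hy3, hD hx1 hy4, hD hx2 hy1, hD hx2 hy2,
    hD hx2 hy3, hD hx3 hy1, hD hx3 hy2, hD hx4 hy1, brM_add_right, brM_add_left, hz1, hz2, hz3,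
    hz4]
  module

lemma brM_melSq_left {h x x1 x2 x3 x4 y y1 y2 y3 y4 : Mel F} (hx1 : brM h x = x1)
    (hx2 : brM h x1 = x2) (hx3 : brM h x2 = x3) (hx4 : brM h x3 = x4) (hy1 : brM h y = y1)
    (hy2 : brM h y1 = y2) (hy3 : brM h y2 = y3) (hy4 : brM h y3 = y4) (z : Mel F) :
    brM (melSq (brM h) x y) z = -(brM (brM x1 y4) z + (2 : F) • brM (brM x2 y3) z +
      (2 : F) • brM (brM x3 y2) z + brM (brM x4 y1) z) := by
  have hn (u v : Mel F) : brM (-u) v = -brM u v := LinearMap.map_neg₂ brB u v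
  simp only [melSq_eq, hx1, hx2, hx3, hx4, hy1, hy2, hy3, hy4, hn, brM_add_left, brM_smul_left]

lemma isCocycle_sqB (h : Mel F) : IsCocycle (sqB h) := by
  refine IsCocycle.of_cyclic (fun x => ?_) fun x y z => ?_
  · rw [sqB_apply, melSq_eq, brM_skew (brM h x), brM_skew (brM h (brM h x))]
    module
  obtain ⟨x1, hx1⟩ : ∃ v, brM h x = v := ⟨_, rfl⟩
  obtain ⟨x2, hx2⟩ : ∃ v, brM h x1 = v := ⟨_, rfl⟩
  obtain ⟨x3, hx3⟩ : ∃ v, brM h x2 = v := ⟨_, rfl⟩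
  obtain ⟨x4, hx4⟩ : ∃ v, brM h x3 = v := ⟨_, rfl⟩
  obtain ⟨y1, hy1⟩ : ∃ v, brM h y = v := ⟨_, rfl⟩
  obtain ⟨y2, hy2⟩ : ∃ v, brM h y1 = v := ⟨_, rfl⟩
  obtain ⟨y3, hy3⟩ : ∃ v, brM h y2 = v := ⟨_, rfl⟩
  obtain ⟨y4, hy4⟩ : ∃ v, brM h y3 = v := ⟨_, rfl⟩
  obtain ⟨z1, hz1⟩ : ∃ v, brM h z = v := ⟨_, rfl⟩
  obtain ⟨z2, hz2⟩ : ∃ v, brM h z1 = v := ⟨_, rfl⟩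
  obtain ⟨z3, hz3⟩ : ∃ v, brM h z2 = v := ⟨_, rfl⟩
  obtain ⟨z4, hz4⟩ : ∃ v, brM h z3 = v := ⟨_, rfl⟩
  simp only [sqB_apply]
  rw [melSq_brM_left hx1 hx2 hx3 hx4 hy1 hy2 hy3 hy4 hz1 hz2 hz3 hz4,
    melSq_brM_left hy1 hy2 hy3 hy4 hz1 hz2 hz3 hz4 hx1 hx2 hx3 hx4,
    melSq_brM_left hz1 hz2 hz3 hz4 hx1 hx2 hx3 hx4 hy1 hy2 hy3 hy4,
    brM_melSq_left hx1 hx2 hx3 hx4 hy1 hy2 hy3 hy4, brM_melSq_left hy1 hy2 hy3 hy4 hz1 hz2 hz3 hz4,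
    brM_melSq_left hz1 hz2 hz3 hz4 hx1 hx2 hx3 hx4]
  linear_combination (norm := module) - brM_jacobi x y1 z4 - brM_jacobi x y4 z1 - brM_jacobi x1 y z4
    - brM_jacobi x1 y4 z - brM_jacobi x4 y z1 - brM_jacobi x4 y1 z
    - (2 : F) • (brM_jacobi x y2 z3 + brM_jacobi x y3 z2 + brM_jacobi x2 y z3
      + brM_jacobi x2 y3 z + brM_jacobi x3 y z2 + brM_jacobi x3 y2 z)
    - (4 : F) • (brM_jacobi x1 y1 z3 + brM_jacobi x1 y3 z1 + brM_jacobi x3 y1 z1)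
    - (6 : F) • (brM_jacobi x1 y2 z2 + brM_jacobi x2 y1 z2 + brM_jacobi x2 y2 z1)

end Cocycles

section Independence

/-- The terms (coefficient, basis element) of `[e x, e y]`. -/
def brList (x y : ℕ) : List (ℕ × ℕ) :=
  brFold (fun n v a b r => bif Nat.ble a 4 && Nat.ble b 4 then (n, v * 25 + (a * 5 + b)) :: r
    else r) [] (x / 25) (x / 5 % 5) (x % 5) (y / 25) (y / 5 % 5) (y % 5)

/-- Multiplies all coefficients by `c`. -/
def scaleList (c : ℕ) (l : List (ℕ × ℕ)) : List (ℕ × ℕ) := l.map fun t => (c * t.1, t.2)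

/-- The terms of the bracket of two linear combinations of basis elements. -/
def brLists (l l' : List (ℕ × ℕ)) : List (ℕ × ℕ) :=
  l.flatMap fun t => l'.flatMap fun t' => scaleList (t.1 * t'.1) (brList t.2 t'.2)

/-- The terms of `(ad (e h))^n (e x)`. -/
def adList (h x : ℕ) : ℕ → List (ℕ × ℕ)
  | 0 => [(1, x)]
  | n + 1 => brLists [(1, h)] (adList h x n)

/-- The terms of `Sq(e h)(e x, e y)`. -/
def sqList (h x y : ℕ) : List (ℕ × ℕ) :=
  scaleList 4 (brLists (adList h x 1) (adList h y 4)) ++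
  scaleList 3 (brLists (adList h x 2) (adList h y 3)) ++
  scaleList 3 (brLists (adList h x 3) (adList h y 2)) ++
  scaleList 4 (brLists (adList h x 4) (adList h y 1))

/-- The coefficient of the basis element `w`. -/
def coefList (w : ℕ) (l : List (ℕ × ℕ)) : ℕ := (l.map fun t => if t.2 = w then t.1 else 0).sum

/-- The coordinate `w` of every two-coboundary vanishes at `(e x, e y)`. -/
def isFree (x y w : ℕ) : Bool :=
  (List.range 125).all (fun k => coefList k (brList x y) % 5 == 0 &&
    coefList w (brList x k) % 5 == 0 && coefList w (brList y k) % 5 == 0)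

/-- The numbers of `1, D₁, D₂, D̃₁, D̃₂` in the basis. -/
def sqIdx : Fin 5 → ℕ := ![0, 25, 50, 75, 100]

/-- Five coordinates `(x, y, w)` of two-cochains which vanish on coboundaries and separate the five
squarings. -/
def freeIdx : Fin 5 → ℕ × ℕ × ℕ :=
  ![(2, 56, 25), (5, 95, 25), (1, 79, 25), (2, 66, 78), (1, 27, 100)]

lemma free_check (i : Fin 5) : isFree (freeIdx i).1 (freeIdx i).2.1 (freeIdx i).2.2 = true := by
  revert i; decide +kernel

lemma sq_check (i j : Fin 5) :
    5 ∣ coefList (freeIdx i).2.2 (sqList (sqIdx j) (freeIdx i).1 (freeIdx i).2.1) ↔ i ≠ j := by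
  revert i j; decide +kernel

/-- The list `l` represents the element `v` of `M`. -/
def Rep (l : List (ℕ × ℕ)) (v : Mel F) : Prop := (∀ t ∈ l, t.2 < 125) ∧ evalT F e l = v

lemma rep_nil : Rep [] (0 : Mel F) := ⟨by simp, rfl⟩

lemma rep_e {k : ℕ} (hk : k < 125) : Rep [(1, k)] (e k : Mel F) :=
  ⟨by simpa using hk, by simp [evalT]⟩

lemma Rep.append {l l' : List (ℕ × ℕ)} {v v' : Mel F} (h : Rep l v) (h' : Rep l' v') :
    Rep (l ++ l') (v + v') := by
  refine ⟨fun t ht => ?_, ?_⟩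
  · rcases List.mem_append.1 ht with ht | ht
    · exact h.1 t ht
    · exact h'.1 t ht
  · rw [← h.2, ← h'.2]; simp [evalT]

lemma Rep.scale {l : List (ℕ × ℕ)} {v : Mel F} (h : Rep l v) (c : ℕ) :
    Rep (scaleList c l) ((c : F) • v) := by
  refine ⟨fun t ht => ?_, ?_⟩
  · obtain ⟨t', ht', rfl⟩ := List.mem_map.1 ht
    exact h.1 t' ht'
  · rw [← h.2]
    simp [evalT, scaleList, List.smul_sum, Function.comp_def, mul_smul]

lemma Rep.coord {l : List (ℕ × ℕ)} {v : Mel F} (h : Rep l v) {w : ℕ} (hw : w < 125) :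
    co w v = (coefList w l : F) := by
  obtain ⟨hl, rfl⟩ := h
  induction l with
  | nil => simp [evalT, coefList]
  | cons t l ih =>
    rw [evalT_cons, map_add, map_smul, co_e hw (hl t (by simp)),
      ih fun t ht => hl t (by simp [ht]), coefList, coefList, List.map_cons, List.sum_cons,
      Nat.cast_add, smul_eq_mul, mul_ite, mul_one, mul_zero, Nat.cast_ite, Nat.cast_zero]

variable [CharP F 5]

lemma rep_brList {x y : ℕ} (hx : x < 125) (hy : y < 125) :
    Rep (brList x y) (brM (e x) (e y) : Mel F) := by
  rw [brM_e hx hy]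
  refine brFold_rel Rep _ _ _ _ _ _ rep_nil fun n k a b r r' hk _ hr => ?_
  have hc : (Nat.ble a 4 && Nat.ble b 4) = decide (a ≤ 4 ∧ b ≤ 4) := by
    rw [Bool.eq_iff_iff]; simp [Nat.ble_eq]
  rw [hc]
  by_cases h : a ≤ 4 ∧ b ≤ 4
  · rw [decide_eq_true h, cond_true, ← e_code (by omega) (by omega)]
    refine ⟨fun t ht => ?_, by rw [evalT_cons, hr.2]⟩
    rcases List.mem_cons.1 ht with rfl | ht
    · change k * 25 + (a * 5 + b) < 125
      omega
    · exact hr.1 t ht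
  · rwa [decide_eq_false h, cond_false, bas_eq_zero (by omega), smul_zero, zero_add]

lemma Rep.brLists {l l' : List (ℕ × ℕ)} {v v' : Mel F} (h : Rep l v) (h' : Rep l' v') :
    Rep (brLists l l') (brM v v') := by
  obtain ⟨hl, rfl⟩ := h
  obtain ⟨hl', rfl⟩ := h'
  induction l with
  | nil =>
    have : brM (evalT F e []) (evalT F e l' : Mel F) = 0 := LinearMap.map_zero₂ brB _
    rw [this]; exact rep_nil
  | cons t l ih =>
    rw [evalT_cons, brM_add_left, brM_smul_left]
    refine Rep.append ?_ (ih fun t ht => hl t (by simp [ht]))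
    clear ih
    induction l' with
    | nil =>
      have : brM (e t.2) (evalT F e [] : Mel F) = 0 := brM_zero_right _
      rw [this, smul_zero]; exact rep_nil
    | cons t' l' ih' =>
      rw [evalT_cons, brM_add_right, smul_add, brM_smul_right, smul_smul, ← Nat.cast_mul]
      exact Rep.append ((rep_brList (hl t (by simp)) (hl' t' (by simp))).scale _)
        (ih' fun t ht => hl' t (by simp [ht]))

lemma rep_adList {h x : ℕ} (hh : h < 125) (hx : x < 125) (n : ℕ) :
    Rep (adList h x n) ((brM (e h))^[n] (e x) : Mel F) := by
  induction n with
  | zero => exact rep_e hx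
  | succ n ih =>
    rw [Function.iterate_succ_apply']
    exact (rep_e hh).brLists ih

lemma rep_sqList {h x y : ℕ} (hh : h < 125) (hx : x < 125) (hy : y < 125) :
    Rep (sqList h x y) (sqB (e h) (e x) (e y) : Mel F) := by
  have h5 : (5 : F) = 0 := by exact_mod_cast CharP.cast_eq_zero F 5
  have h4 : ((4 : ℕ) : F) = -1 := by push_cast; linear_combination h5
  have h3 : ((3 : ℕ) : F) = -2 := by push_cast; linear_combination h5
  have key (n m c : ℕ) :=
    (((rep_adList hh hx n).brLists (rep_adList (F := F) hh hy m)).scale c)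
  have := (((key 1 4 4).append (key 2 3 3)).append (key 3 2 3)).append (key 4 1 4)
  rw [h3, h4] at this
  refine ⟨this.1, this.2.trans ?_⟩
  rw [sqB_apply, melSq_eq]
  simp only [Function.iterate_succ, Function.iterate_zero, Function.comp_apply, id_eq]
  module

lemma co_cob_eq_zero (g : Mel F →ₗ[F] Mel F) {x y w : ℕ} (hx : x < 125) (hy : y < 125)
    (hw : w < 125) (h : isFree x y w = true) : co w (cob g (e x) (e y)) = 0 := by
  have h' (k : ℕ) (hk : k < 125) : 5 ∣ coefList k (brList x y) ∧ 5 ∣ coefList w (brList x k) ∧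
      5 ∣ coefList w (brList y k) := by
    have := List.all_eq_true.1 h k (List.mem_range.2 hk)
    simp only [Bool.and_eq_true, beq_iff_eq] at this
    omega
  have hxy : brM (e x) (e y : Mel F) = 0 := by
    rw [eq_sum_e (brM (e x) (e y : Mel F))]
    refine Finset.sum_eq_zero fun k hk => ?_
    rw [(rep_brList hx hy).coord (Finset.mem_range.1 hk),
      (CharP.cast_eq_zero_iff F 5 _).2 (h' k (Finset.mem_range.1 hk)).1, zero_smul]
  have hl (z : ℕ) (hz : z < 125) (hd : ∀ k < 125, 5 ∣ coefList w (brList z k)) (v : Mel F) :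
      co w (brM (e z) v) = 0 := by
    have : co w ∘ₗ brB (e z) = (0 : Mel F →ₗ[F] F) := ext_e fun k hk => by
      rw [LinearMap.comp_apply, brB_apply, (rep_brList hz hk).coord hw, LinearMap.zero_apply,
        (CharP.cast_eq_zero_iff F 5 _).2 (hd k hk)]
    exact LinearMap.congr_fun this v
  rw [cob, hxy, map_zero, sub_zero, map_sub, hl x hx (fun k hk => (h' k hk).2.1),
    hl y hy (fun k hk => (h' k hk).2.2), sub_zero]

/-- No nontrivial combination of the five squarings is a coboundary. -/
lemma sq_independent {c : Fin 5 → F} {g : Mel F →ₗ[F] Mel F}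
    (h : ∑ j, c j • sqB (e (sqIdx j)) = cobB g) : c = 0 := by
  funext i
  have hb : (freeIdx i).1 < 125 ∧ (freeIdx i).2.1 < 125 ∧ (freeIdx i).2.2 < 125 := by
    revert i; decide
  have hj (j : Fin 5) : sqIdx j < 125 := by revert j; decide
  have := congrArg (co (freeIdx i).2.2)
    (LinearMap.congr_fun₂ h (e (freeIdx i).1) (e (freeIdx i).2.1))
  rw [cobB_apply, co_cob_eq_zero g hb.1 hb.2.1 hb.2.2 (free_check i), LinearMap.sum_apply,
    LinearMap.sum_apply, map_sum, Finset.sum_eq_single i (fun j _ hji => ?_) (by simp),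
    LinearMap.smul_apply, LinearMap.smul_apply, map_smul,
    (rep_sqList (hj i) hb.1 hb.2.1).coord hb.2.2, smul_eq_mul] at this
  · refine (mul_eq_zero.1 this).resolve_right fun h0 => ?_
    exact (sq_check i i).1 ((CharP.cast_eq_zero_iff F 5 _).1 h0) rfl
  · rw [LinearMap.smul_apply, LinearMap.smul_apply, map_smul,
      (rep_sqList (hj j) hb.1 hb.2.1).coord hb.2.2,
      (CharP.cast_eq_zero_iff F 5 _).2 ((sq_check i j).2 hji.symm), smul_zero]

end Independence

section Classification

/-- The action of `h` on bilinear maps. -/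
def lieOp (h : Mel F) (f : Mel F →ₗ[F] Mel F →ₗ[F] Mel F) : Mel F →ₗ[F] Mel F →ₗ[F] Mel F :=
  f.compr₂ (brB h) - f ∘ₗ brB h - f.compl₂ (brB h)

lemma lieOp_apply (h : Mel F) (f : Mel F →ₗ[F] Mel F →ₗ[F] Mel F) (x y : Mel F) :
    lieOp h f x y = brM h (f x y) - f (brM h x) y - f x (brM h y) := rfl

/-- The weight zero linear map with given coordinates. -/
def wtMap : (Fin 125 → Fin 5 → F) →ₗ[F] Mel F →ₗ[F] Mel F where
  toFun a := ∑ i : Fin 125, (co i).smulRight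
    (∑ s : Fin 5, a i s • (bas s (ex1 s (wt1 i)) (ex2 s (wt2 i)) : Mel F))
  map_add' a b := by
    rw [← Finset.sum_add_distrib]
    refine Finset.sum_congr rfl fun i _ => LinearMap.ext fun v => ?_
    simp only [LinearMap.smulRight_apply, LinearMap.add_apply, Pi.add_apply, add_smul,
      Finset.sum_add_distrib, smul_add]
  map_smul' c a := by
    rw [Finset.smul_sum]
    refine Finset.sum_congr rfl fun i _ => LinearMap.ext fun v => ?_
    simp only [LinearMap.smulRight_apply, LinearMap.smul_apply, Pi.smul_apply, smul_eq_mul,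
      mul_smul, ← Finset.smul_sum, RingHom.id_apply]
    rw [smul_comm]

lemma wtMap_e (a : Fin 125 → Fin 5 → F) (i : Fin 125) : wtMap a (e i) =
    ∑ s : Fin 5, a i s • (bas s (ex1 s (wt1 i)) (ex2 s (wt2 i)) : Mel F) := by
  simp only [wtMap, LinearMap.coe_mk, AddHom.coe_mk, LinearMap.sum_apply,
    LinearMap.smulRight_apply]
  rw [Finset.sum_eq_single i]
  · rw [co_e i.2 i.2, if_pos rfl, one_smul]
  · intro j _ hj
    rw [co_e j.2 i.2, if_neg (fun h => hj (Fin.ext h.symm)), zero_smul]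
  · simp

/-- The combination of the five squarings and a weight zero coboundary with given coefficients. -/
def cocycleOf : ((Fin 5 → F) × (Fin 125 → Fin 5 → F)) →ₗ[F] Mel F →ₗ[F] Mel F →ₗ[F] Mel F :=
  LinearMap.coprod (∑ j, (LinearMap.proj j).smulRight (sqB (e (sqIdx j)))) (cobB ∘ₗ wtMap)

lemma cocycleOf_apply (t : (Fin 5 → F) × (Fin 125 → Fin 5 → F)) :
    cocycleOf t = ∑ j, t.1 j • sqB (e (sqIdx j)) + cobB (wtMap t.2) := by
  simp [cocycleOf]

/-- The action of `M` on its cohomology is trivial. -/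
lemma lieOp_eq_cobB {f : Mel F →ₗ[F] Mel F →ₗ[F] Mel F} (hf : IsCocycle f) (h : Mel F) :
    lieOp h f = cobB (f h) := by
  refine LinearMap.ext₂ fun y z => ?_
  rw [lieOp_apply, cobB_apply, cob]
  linear_combination (norm := module) hf.2 h y z - hf.skew y (brM h z) + hf.skew h (brM y z)

lemma comp_lieOp_pow {h : Mel F} {N : ℕ → Idx → ℕ} {p : ℕ → ℕ}
    (hN : ∀ s < 5, ∀ v i, comp s (brM h v) i = (N s i : F) * comp s v i)
    (hp : ∀ i < 125, brM h (e i) = (p i : F) • e i) (f : Mel F →ₗ[F] Mel F →ₗ[F] Mel F)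
    {i j s : ℕ} (hi : i < 125) (hj : j < 125) (hs : s < 5) (k : Idx) (n : ℕ) :
    comp s ((lieOp h)^[n] f (e i) (e j)) k =
      ((N s k : F) - (p i + p j : ℕ)) ^ n * comp s (f (e i) (e j)) k := by
  induction n with
  | zero => simp
  | succ n ih =>
    rw [Function.iterate_succ_apply', lieOp_apply, hp i hi, hp j hj, map_smul, map_smul,
      LinearMap.smul_apply, map_sub, map_sub, map_smul, map_smul, Pi.sub_apply, Pi.sub_apply,
      Pi.smul_apply, Pi.smul_apply, hN s hs, ih, pow_succ, smul_eq_mul, smul_eq_mul]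
    push_cast
    ring

lemma wtMap_injective {a : Fin 125 → Fin 5 → F} (h : wtMap a = 0) : a = 0 := by
  funext i s
  have := congrArg (kc s (wt1 i) (wt2 i)) (LinearMap.congr_fun h (e i))
  rw [wtMap_e, map_sum, Finset.sum_eq_single s, map_smul, kc_bas s.2 s.2, if_pos ⟨rfl, rfl, rfl⟩,
    smul_eq_mul, mul_one, LinearMap.zero_apply, map_zero] at this
  · exact this
  · intro t _ hts
    rw [map_smul, kc_bas s.2 t.2, if_neg (fun h => hts (Fin.ext h.1)), smul_zero]
  · simp

lemma sum_sqB_apply (c : Fin 5 → F) (x y : Mel F) :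
    (∑ j, c j • sqB (e (sqIdx j))) x y = c 0 • melSq (brM oneM) x y
      + c 1 • melSq (brM (DD 0)) x y + c 2 • melSq (brM (DD 1)) x y
      + c 3 • melSq (brM (TT 0)) x y + c 4 • melSq (brM (TT 1)) x y := by
  have h0 : (oneM : Mel F) = e 0 := by simp [oneM, ιA, e, bas, inj, X_eq_mon]
  have h1 : (DD 0 : Mel F) = e 25 := by simp [DD, wOf, ιW, e, bas, inj, X_eq_mon]
  have h2 : (DD 1 : Mel F) = e 50 := by simp [DD, wOf, ιW, e, bas, inj, X_eq_mon]
  have h3 : (TT 0 : Mel F) = e 75 := by simp [TT, wOf, ιT, e, bas, inj, X_eq_mon]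
  have h4 : (TT 1 : Mel F) = e 100 := by simp [TT, wOf, ιT, e, bas, inj, X_eq_mon]
  rw [h0, h1, h2, h3, h4]
  simp [Fin.sum_univ_five, sqIdx, sqB_apply]

variable [CharP F 5]

/-- The alternating two-cocycles form a subspace. -/
def cocycles : Submodule F (Mel F →ₗ[F] Mel F →ₗ[F] Mel F) where
  carrier := {f | IsCocycle f}
  zero_mem' := by simp [IsCocycle, brM_zero_right]
  add_mem' {f g} hf hg := by
    refine ⟨fun x => ?_, fun x y z => ?_⟩
    · rw [LinearMap.add_apply, LinearMap.add_apply, hf.1, hg.1, add_zero]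
    · simp only [LinearMap.add_apply, brM_add_right]
      linear_combination (norm := module) hf.2 x y z + hg.2 x y z
  smul_mem' c f hf := by
    refine ⟨fun x => ?_, fun x y z => ?_⟩
    · rw [LinearMap.smul_apply, LinearMap.smul_apply, hf.1, smul_zero]
    · simp only [LinearMap.smul_apply, brM_smul_right]
      linear_combination (norm := module) c • hf.2 x y z

/-- The bilinear maps of weight zero form a subspace. -/
def wtZero : Submodule F (Mel F →ₗ[F] Mel F →ₗ[F] Mel F) where
  carrier := {f | WtZero f}
  zero_mem' _ _ _ _ := isWt_zero _ _
  add_mem' hf hg i hi j hj := (hf i hi j hj).add (hg i hi j hj)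
  smul_mem' c _ hf i hi j hj := (hf i hi j hj).smul c

lemma exists_lieOp_pow {f : Mel F →ₗ[F] Mel F →ₗ[F] Mel F} (hf : IsCocycle f) (h : Mel F)
    (n : ℕ) : ∃ g, (lieOp h)^[n + 1] f = cobB g := by
  induction n with
  | zero => exact ⟨f h, lieOp_eq_cobB hf h⟩
  | succ n ih =>
    obtain ⟨g, hg⟩ := ih
    rw [Function.iterate_succ_apply', hg]
    exact ⟨_, lieOp_eq_cobB (isCocycle_cobB g) h⟩

lemma pow_four_natCast_sub {n l : ℕ} (h : n % 5 ≠ l % 5) : ((n : F) - l) ^ 4 = 1 := by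
  have h5 : ((n : F) - l) ^ 5 = n - l := by
    have := Fact.mk Nat.prime_five
    exact_mod_cast (sub_pow_char (p := 5) (n : F) (l : F)).trans
      (congrArg₂ _ (map_natCast (frobenius F 5) n) (map_natCast (frobenius F 5) l))
  have h0 : (n : F) - l ≠ 0 := by
    rw [sub_ne_zero, Ne, CharP.natCast_eq_natCast F 5]
    exact h
  exact mul_right_cancel₀ h0 (by rw [← pow_succ, h5, one_mul])

lemma comp_sub_lieOp_pow {h : Mel F} {N : ℕ → Idx → ℕ} {p : ℕ → ℕ}
    (hN : ∀ s < 5, ∀ v i, comp s (brM h v) i = (N s i : F) * comp s v i)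
    (hp : ∀ i < 125, brM h (e i) = (p i : F) • e i) (f : Mel F →ₗ[F] Mel F →ₗ[F] Mel F)
    {i j s : ℕ} (hi : i < 125) (hj : j < 125) (hs : s < 5) (k : Idx)
    (hk : N s k % 5 ≠ (p i + p j) % 5 ∨ comp s (f (e i) (e j)) k = 0) :
    comp s ((f - (lieOp h)^[4] f) (e i) (e j)) k = 0 := by
  rw [LinearMap.sub_apply, LinearMap.sub_apply, map_sub, Pi.sub_apply,
    comp_lieOp_pow hN hp f hi hj hs]
  rcases hk with hk | hk
  · rw [pow_four_natCast_sub hk, one_mul, sub_self]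
  · rw [hk, mul_zero, sub_self]

/-- Every cocycle is cohomologous to one of weight zero. -/
lemma exists_wtZero {f : Mel F →ₗ[F] Mel F →ₗ[F] Mel F} (hf : IsCocycle f) :
    ∃ g, IsCocycle (f - cobB g) ∧ WtZero (f - cobB g) := by
  obtain ⟨g₁, hg₁⟩ := exists_lieOp_pow hf x1D1 3
  have hf₁ : IsCocycle (f - cobB g₁) :=
    (cocycles (F := F)).sub_mem (x := f) hf (isCocycle_cobB g₁)
  obtain ⟨g₂, hg₂⟩ := exists_lieOp_pow hf₁ x2D2 3
  refine ⟨g₁ + g₂, ?_, fun i hi j hj => isWt_of_comp fun s hs k hk => ?_⟩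
  · exact (cocycles (F := F)).sub_mem (x := f) hf (isCocycle_cobB _)
  rw [eq_ex1_iff k.1.isLt, eq_ex2_iff k.2.isLt, not_and_or] at hk
  have hsub : f - cobB (g₁ + g₂) = f - cobB g₁ - cobB g₂ :=
    (congrArg (f - ·) (map_add cobB g₁ g₂)).trans (sub_sub f (cobB g₁) (cobB g₂)).symm
  rw [hsub, ← hg₂]
  refine comp_sub_lieOp_pow (N := fun s k => k.2.val + sh2 s) (p := wt2)
    (fun s hs v i => comp_brM_x2D2 hs v i) (fun i hi => (isWt_e hi).2) _ hi hj hs k ?_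
  rcases hk with hk | hk
  · right
    rw [← hg₁]
    exact comp_sub_lieOp_pow (N := fun s k => k.1.val + sh1 s) (p := wt1)
      (fun s hs v i => comp_brM_x1D1 hs v i) (fun i hi => (isWt_e hi).1) _ hi hj hs k (Or.inl hk)
  · exact Or.inl hk

lemma isWt_wtMap (a : Fin 125 → Fin 5 → F) (i : ℕ) (hi : i < 125) :
    IsWt (wt1 i) (wt2 i) (wtMap a (e i)) := by
  rw [show e i = e (⟨i, hi⟩ : Fin 125).val from rfl, wtMap_e]
  refine Finset.sum_induction _ (IsWt (wt1 i) (wt2 i)) (fun _ _ => IsWt.add) (isWt_zero _ _)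
    fun s _ => IsWt.smul _ ((isWt_bas s.2 _ _).congr ?_ ?_)
  · exact (eq_ex1_iff (ex1_lt _ _)).1 rfl
  · exact (eq_ex2_iff (ex2_lt _ _)).1 rfl

lemma IsWt.map {g : Mel F →ₗ[F] Mel F} (hg : ∀ i < 125, IsWt (wt1 i) (wt2 i) (g (e i)))
    {p q : ℕ} {v : Mel F} (hv : IsWt p q v) : IsWt p q (g v) := by
  rw [hv.eq_sum, map_sum]
  refine Finset.sum_induction _ (IsWt p q) (fun _ _ => IsWt.add) (isWt_zero _ _) fun s hs => ?_
  have h1 := ex1_lt s p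
  have h2 := ex2_lt s q
  have hs := Finset.mem_range.1 hs
  have hw := wt_code (k := s) (Nat.le_of_lt_succ h1) (Nat.le_of_lt_succ h2)
  rw [map_smul, ← e_code h1 h2]
  refine IsWt.smul _ ((hg _ (by omega)).congr ?_ ?_)
  · rw [hw.1]; exact (eq_ex1_iff h1).1 rfl
  · rw [hw.2]; exact (eq_ex2_iff h2).1 rfl

lemma wtZero_cobB {g : Mel F →ₗ[F] Mel F} (hg : ∀ i < 125, IsWt (wt1 i) (wt2 i) (g (e i))) :
    WtZero (cobB g) := by
  intro i hi j hj
  rw [cobB_apply, cob, brM_skew (e j), sub_neg_eq_add, sub_eq_add_neg, ← neg_one_smul F]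
  exact (((isWt_e hi).brM (hg j hj)).add ((hg i hi).brM (isWt_e hj))).add
    ((IsWt.map hg ((isWt_e hi).brM (isWt_e hj))).smul _)

lemma wtZero_sqB {k : ℕ} (hk : k < 125) : WtZero (sqB (e k : Mel F)) := by
  intro i hi j hj
  have h := isWt_e (F := F) hk
  have hi := isWt_e (F := F) hi
  have hj := isWt_e (F := F) hj
  rw [sqB_apply, melSq_eq, ← neg_one_smul F]
  refine IsWt.smul _ (IsWt.add (IsWt.add (IsWt.add ?_ (IsWt.smul _ ?_)) (IsWt.smul _ ?_)) ?_)
  · exact ((h.brM hi).brM (h.brM (h.brM (h.brM (h.brM hj))))).congr (by omega) (by omega)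
  · exact ((h.brM (h.brM hi)).brM (h.brM (h.brM (h.brM hj)))).congr (by omega) (by omega)
  · exact ((h.brM (h.brM (h.brM hi))).brM (h.brM (h.brM hj))).congr (by omega) (by omega)
  · exact ((h.brM (h.brM (h.brM (h.brM hi)))).brM (h.brM hj)).congr (by omega) (by omega)

lemma cocycleOf_mem (t : (Fin 5 → F) × (Fin 125 → Fin 5 → F)) :
    IsCocycle (cocycleOf t) ∧ WtZero (cocycleOf t) := by
  have hj (j : Fin 5) : sqIdx j < 125 := by revert j; decide
  rw [cocycleOf_apply]
  exact ⟨(cocycles (F := F)).add_mem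
    ((cocycles (F := F)).sum_mem fun j _ => (cocycles (F := F)).smul_mem _ (isCocycle_sqB _))
      (isCocycle_cobB _),
    (wtZero (F := F)).add_mem ((wtZero (F := F)).sum_mem fun j _ =>
      (wtZero (F := F)).smul_mem _ (wtZero_sqB (hj j))) (wtZero_cobB (isWt_wtMap _))⟩

/-- The gauge coordinates of bilinear maps. -/
def gauge : (Mel F →ₗ[F] Mel F →ₗ[F] Mel F) →ₗ[F] Fin gaugeList.length → F where
  toFun f i := valCo f (gaugeList.get i)
  map_add' f g := by
    funext i
    simp [valCo]
  map_smul' c f := by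
    funext i
    simp [valCo]

/-- The gauge coordinates of linear maps. -/
def derGauge : (Mel F →ₗ[F] Mel F) →ₗ[F] Fin 5 → F where
  toFun g i := valDer g (![0, 1, 2, 3, 5] i)
  map_add' f g := by
    funext i
    simp [valDer]
  map_smul' c f := by
    funext i
    simp [valDer]

lemma gauge_injective {f : Mel F →ₗ[F] Mel F →ₗ[F] Mel F} (hf : IsCocycle f) (hf' : WtZero f)
    (h : gauge f = 0) : f = 0 := by
  refine cocycle_eq_zero hf hf' fun u hu => ?_
  obtain ⟨i, rfl⟩ := List.mem_iff_get.1 hu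
  exact congrFun h i

lemma derGauge_injective {g : Mel F →ₗ[F] Mel F} (hg : cobB g = 0)
    (hg' : ∀ i < 125, IsWt (wt1 i) (wt2 i) (g (e i))) (h : derGauge g = 0) : g = 0 := by
  refine derivation_eq_zero
    (fun x y => by rw [← cobB_apply, hg, LinearMap.zero_apply, LinearMap.zero_apply]) hg'
    fun u hu => ?_
  have : ∀ u ∈ [0, 1, 2, 3, 5], ∃ i : Fin 5, (![0, 1, 2, 3, 5] : Fin 5 → ℕ) i = u := by decide
  obtain ⟨i, rfl⟩ := this u hu
  exact congrFun h i

set_option maxRecDepth 100000 in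
lemma length_gaugeList : gaugeList.length = 625 := by decide +kernel

/-- Every cocycle of weight zero is a combination of the squarings and a coboundary. -/
lemma exists_cocycleOf_eq {f : Mel F →ₗ[F] Mel F →ₗ[F] Mel F} (hf : IsCocycle f)
    (hf' : WtZero f) : ∃ t, cocycleOf t = f := by
  let Ψ : ((Fin 5 → F) × (Fin 125 → Fin 5 → F)) →ₗ[F]
      (Fin gaugeList.length → F) × (Fin 5 → F) :=
    (gauge ∘ₗ cocycleOf).prod (derGauge ∘ₗ wtMap ∘ₗ LinearMap.snd F _ _)
  have hΨ : Function.Injective Ψ := by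
    rw [← LinearMap.ker_eq_bot, LinearMap.ker_eq_bot']
    intro t ht
    obtain ⟨h1, h2⟩ := Prod.mk_eq_zero.1 ((LinearMap.prod_apply ..).symm.trans ht)
    rw [LinearMap.comp_apply] at h1
    rw [LinearMap.comp_apply, LinearMap.comp_apply, LinearMap.snd_apply] at h2
    have h0 := gauge_injective (cocycleOf_mem t).1 (cocycleOf_mem t).2 h1
    rw [cocycleOf_apply] at h0
    have hc : t.1 = 0 := sq_independent (g := -wtMap t.2) (by
      rw [map_neg]; exact eq_neg_of_add_eq_zero_left h0)
    simp only [hc, Pi.zero_apply, zero_smul, Finset.sum_const_zero, zero_add] at h0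
    exact Prod.ext hc (wtMap_injective (derGauge_injective h0 (isWt_wtMap _) h2))
  have hsurj := (LinearMap.injective_iff_surjective_of_finrank_eq_finrank (f := Ψ) (by
    simp [Module.finrank_pi_fintype F (M := fun _ : Fin 125 => Fin 5 → F), length_gaugeList])).1 hΨ
  obtain ⟨t, ht⟩ := hsurj (gauge f, 0)
  refine ⟨t, sub_eq_zero.1 (gauge_injective
    ((cocycles (F := F)).sub_mem (x := cocycleOf t) (y := f) (cocycleOf_mem t).1 hf)
    ((wtZero (F := F)).sub_mem (x := cocycleOf t) (y := f) (cocycleOf_mem t).2 hf') ?_)⟩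
  rw [map_sub, sub_eq_zero]
  exact congrArg Prod.fst ht

end Classification

/-- The second cohomology of the Melikian algebra with values in the adjoint
representation is 5-dimensional:
`H²(M, M) = ⟨Sq(1)⟩ ⊕ ⟨Sq(D₁)⟩ ⊕ ⟨Sq(D₂)⟩ ⊕ ⟨Sq(D̃₁)⟩ ⊕ ⟨Sq(D̃₂)⟩`,
i.e. every `2`-cocycle is a linear combination of the five squaring cocycles plus a
coboundary, and the five squaring cocycles are linearly independent modulo
coboundaries. -/
theorem melikian_H2 (F : Type*) [Field F] [CharP F 5] :
    (∀ f : Mel F → Mel F → Mel F,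
      (∀ y, IsLinearMap F fun x => f x y) → (∀ x, IsLinearMap F (f x)) →
      (∀ x, f x x = 0) →
      (∀ x y z : Mel F,
        brM x (f y z) - brM y (f x z) + brM z (f x y)
          - f (brM x y) z + f (brM x z) y - f (brM y z) x = 0) →
      ∃ (c : Fin 5 → F) (g : Mel F →ₗ[F] Mel F), ∀ x y : Mel F,
        f x y = c 0 • melSq (brM oneM) x y + c 1 • melSq (brM (DD 0)) x y
          + c 2 • melSq (brM (DD 1)) x y + c 3 • melSq (brM (TT 0)) x y
          + c 4 • melSq (brM (TT 1)) x y + cob g x y) ∧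
    (∀ c : Fin 5 → F,
      (∃ g : Mel F →ₗ[F] Mel F, ∀ x y : Mel F,
        c 0 • melSq (brM oneM) x y + c 1 • melSq (brM (DD 0)) x y
          + c 2 • melSq (brM (DD 1)) x y + c 3 • melSq (brM (TT 0)) x y
          + c 4 • melSq (brM (TT 1)) x y = cob g x y) →
      c = 0) := by
  refine ⟨fun f hl hr ha hc => ?_, fun c ⟨g, hg⟩ =>
    sq_independent (g := g) (LinearMap.ext₂ fun x y => ?_)⟩
  · let B : Mel F →ₗ[F] Mel F →ₗ[F] Mel F := LinearMap.mk₂ F f (fun x x' y => (hl y).map_add x x')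
      (fun c x y => (hl y).map_smul c x) (fun x y y' => (hr x).map_add y y')
      (fun c x y => (hr x).map_smul c y)
    obtain ⟨g, hg, hg'⟩ := exists_wtZero (f := B) ⟨ha, hc⟩
    obtain ⟨t, ht⟩ := exists_cocycleOf_eq hg hg'
    refine ⟨t.1, wtMap t.2 + g, fun x y => ?_⟩
    have hB := LinearMap.congr_fun₂ ht x y
    rw [cocycleOf_apply, LinearMap.add_apply, LinearMap.add_apply, LinearMap.sub_apply,
      LinearMap.sub_apply, sum_sqB_apply, eq_sub_iff_add_eq, add_assoc] at hB
    rw [← cobB_apply, map_add, LinearMap.add_apply, LinearMap.add_apply]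
    exact hB.symm
  · rw [sum_sqB_apply, cobB_apply, hg]


end Melikian
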